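/- arXiv:1404.0165 — 5 statements merged into one kernel-verified Lean document; each statement's English description precedes it below -/
import Mathlib

section
/- Let α be an irrational vector in ℝ^d and let S ⊆ ℝ^d be a bounded measurable set. Then S is a bounded remainder set with respect to α if and only if there exists a bounded measurable real-valued function g on 𝕋^d such that χ_S(x) − Leb(S) = g(x) − g(x − α) for almost every x ∈ 𝕋^d. -/
/-! The cohomological equation is solved by an upper limit along the forward orbit. Put
`f = χ_S − Leb S` and `D_n(x) = ∑_{k<n} f(x + kα)`, so that `D_{n+1}(x) = f(x) + D_n(x + α)`
(`disc_succ`). If the `D_n` are bounded almost everywhere, then `h = limsup_n D_n` is finite almost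
everywhere, and taking `limsup` in the recursion gives `h(x) = f(x) + h(x + α)`. Hence
`g(x) = −h(x + α)` satisfies `g(x) − g(x − α) = f(x)`. To make `g` bounded everywhere, each `D_n` is
truncated to `[-K, K]` before the `limsup` is taken (`clampLimsup`), which changes `h` only on a
null set.

Conversely, if `f(x) = g(x) − g(x − α)` almost everywhere, then for almost every `x` this holds at
all points `x + kα`, and `D_n(x)` telescopes to `g(x + (n-1)α) − g(x − α)`, which is bounded by
`2 sup |g|`. -/

open MeasureTheory

/-- The multiplicity function of the projection of `S ⊆ ℝ^d` to the torus `ℝ^d/ℤ^d`,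
viewed as a `ℤ^d`-periodic function on `ℝ^d`. -/
noncomputable def multFn {d : ℕ} (S : Set (Fin d → ℝ)) (x : Fin d → ℝ) : ℝ :=
  ∑' k : Fin d → ℤ, Set.indicator S (fun _ => (1 : ℝ)) (x + fun i => (k i : ℝ))

/-- The discrepancy `∑_{k=0}^{n-1} χ_S(x + k v) − n · Leb(S)`. -/
noncomputable def disc {d : ℕ} (v : Fin d → ℝ) (S : Set (Fin d → ℝ)) (n : ℕ)
    (x : Fin d → ℝ) : ℝ :=
  (∑ k ∈ Finset.range n, multFn S (x + (k : ℝ) • v)) - n * (volume S).toReal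

/-- `S` is a bounded remainder set with respect to the vector `v`. -/
def IsBRS {d : ℕ} (v : Fin d → ℝ) (S : Set (Fin d → ℝ)) : Prop :=
  ∃ C : ℝ, ∀ᵐ x : Fin d → ℝ, ∀ n : ℕ, 1 ≤ n → |disc v S n x| ≤ C

/-- `α ∈ ℝ^d` is an irrational vector: `1, α₁, …, α_d` are linearly independent over `ℚ`. -/
def IsIrrationalVector {d : ℕ} (α : Fin d → ℝ) : Prop :=
  ∀ (n₀ : ℤ) (n : Fin d → ℤ), (n₀ : ℝ) + ∑ i, (n i : ℝ) * α i = 0 → n₀ = 0 ∧ n = 0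

/-- The subgroup `ℤα + ℤ^d` of `ℝ^d`. -/
def lat {d : ℕ} (α : Fin d → ℝ) : Set (Fin d → ℝ) :=
  {v | ∃ (q : ℤ) (p : Fin d → ℤ), v = (q : ℝ) • α + fun i => (p i : ℝ)}

/-- The parallelepiped spanned by the vectors `v 1, …, v d`. -/
def paral {d : ℕ} (v : Fin d → Fin d → ℝ) : Set (Fin d → ℝ) :=
  {x | ∃ t : Fin d → ℝ, (∀ k, 0 ≤ t k ∧ t k < 1) ∧ x = ∑ k, t k • v k}

/-- A `ℤ^d`-periodic function on `ℝ^d`, i.e. a function on the torus. -/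
def IsZdPeriodic {d : ℕ} (g : (Fin d → ℝ) → ℝ) : Prop :=
  ∀ (x : Fin d → ℝ) (k : Fin d → ℤ), g (x + fun i => (k i : ℝ)) = g x

/-- `g` is a transfer function for `S` with respect to `v`:
a function on the torus with `χ_S(x) − Leb S = g(x) − g(x−v)` a.e. -/
def IsTransfer {d : ℕ} (v : Fin d → ℝ) (S : Set (Fin d → ℝ)) (g : (Fin d → ℝ) → ℝ) : Prop :=
  IsZdPeriodic g ∧
    ∀ᵐ x : Fin d → ℝ, multFn S x - (volume S).toReal = g x - g (x - v)

/-- A bounded function whose set of discontinuity points is Lebesgue-null. -/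
def RiemannIntegrableFn {d : ℕ} (g : (Fin d → ℝ) → ℝ) : Prop :=
  (∃ M : ℝ, ∀ x, |g x| ≤ M) ∧ volume {x | ¬ ContinuousAt g x} = 0

/-- A bounded set is Riemann measurable if its boundary is Lebesgue-null. -/
def IsRiemannMeasurable {d : ℕ} (S : Set (Fin d → ℝ)) : Prop :=
  Bornology.IsBounded S ∧ volume (frontier S) = 0

/-- `S` and `S'` are equidecomposable, with pieces satisfying the predicate `P`,
using translations by vectors in `Γ`. -/
def EquidecompBy {d : ℕ} (P : Set (Fin d → ℝ) → Prop)
    (S S' : Set (Fin d → ℝ)) (Γ : Set (Fin d → ℝ)) : Prop :=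
  ∃ (N : ℕ) (A : Fin N → Set (Fin d → ℝ)) (γ : Fin N → Fin d → ℝ),
    (∀ i, P (A i)) ∧ (∀ i, γ i ∈ Γ) ∧
    (∀ i j, i ≠ j → volume (A i ∩ A j) = 0) ∧
    volume (symmDiff S (⋃ i, A i)) = 0 ∧
    (∀ i j, i ≠ j → volume (((fun x => x + γ i) '' A i) ∩ ((fun x => x + γ j) '' A j)) = 0) ∧
    volume (symmDiff S' (⋃ i, (fun x => x + γ i) '' A i)) = 0

/-- A set is centrally symmetric if it equals its reflection about some point `c`. -/
def IsCentrallySymmetric {d : ℕ} (A : Set (Fin d → ℝ)) : Prop :=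
  ∃ c : Fin d → ℝ, ∀ x, x ∈ A ↔ (2 : ℝ) • c - x ∈ A


lemma multFn_periodic {d : ℕ} (S : Set (Fin d → ℝ)) : IsZdPeriodic (multFn S) := by
  intro x k
  unfold multFn
  rw [← (Equiv.addLeft k).tsum_eq
    (fun m : Fin d → ℤ => Set.indicator S (fun _ => (1 : ℝ)) (x + fun i => (m i : ℝ)))]
  refine tsum_congr fun m => ?_
  congr 1
  ext i
  simp [add_assoc]

/-- No summability is needed: the `ℝ≥0∞`-valued sum has finite terms, so its `toReal` agrees with
the real `tsum` even where the sum diverges (both are then `0`). -/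
lemma measurable_multFn {d : ℕ} {S : Set (Fin d → ℝ)} (hS : MeasurableSet S) :
    Measurable (multFn S) := by
  have h : multFn S = fun x => (∑' k : Fin d → ℤ,
      Set.indicator S (fun _ => (1 : ENNReal)) (x + fun i => (k i : ℝ))).toReal := by
    funext x
    rw [ENNReal.tsum_toReal_eq]
    · refine tsum_congr fun k => ?_
      by_cases hx : (x + fun i => (k i : ℝ)) ∈ S <;> simp [hx]
    · intro k
      by_cases hx : (x + fun i => (k i : ℝ)) ∈ S <;> simp [hx]
  rw [h]
  refine (Measurable.tsum fun k => ?_).ennreal_toReal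
  exact (measurable_const.indicator hS).comp (measurable_id.add_const _)

lemma disc_periodic {d : ℕ} (v : Fin d → ℝ) (S : Set (Fin d → ℝ)) (n : ℕ) :
    IsZdPeriodic (disc v S n) := by
  intro x k
  unfold disc
  congr 1
  refine Finset.sum_congr rfl fun j _ => ?_
  rw [add_right_comm, multFn_periodic]

lemma measurable_disc {d : ℕ} (v : Fin d → ℝ) {S : Set (Fin d → ℝ)} (hS : MeasurableSet S)
    (n : ℕ) : Measurable (disc v S n) :=
  (Finset.measurable_sum _ fun _ _ =>
    (measurable_multFn hS).comp (measurable_id.add_const _)).sub_const _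

/-- The cocycle relation `D_{n+1}(x) = f(x) + D_n(x + v)`, with `f = χ_S − Leb S`. -/
lemma disc_succ {d : ℕ} (v : Fin d → ℝ) (S : Set (Fin d → ℝ)) (n : ℕ) (x : Fin d → ℝ) :
    disc v S (n + 1) x = (multFn S x - (volume S).toReal) + disc v S n (x + v) := by
  have h : ∀ k : ℕ, x + ((k + 1 : ℕ) : ℝ) • v = x + v + (k : ℝ) • v := by
    intro k
    push_cast
    rw [add_smul, one_smul]
    abel
  unfold disc
  rw [Finset.sum_range_succ']
  simp only [h]
  push_cast
  simp only [zero_smul, add_zero]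
  ring

/-- The upper limit over `n` of the discrepancies `disc v S n x` truncated to `[-K, K]`. The
truncation makes this a genuine (finite) upper limit at every point. -/
noncomputable def clampLimsup {d : ℕ} (v : Fin d → ℝ) (S : Set (Fin d → ℝ)) (K : ℝ)
    (x : Fin d → ℝ) : ℝ :=
  Filter.limsup (fun n : ℕ => max (-K) (min K (disc v S n x))) Filter.atTop

lemma clampLimsup_periodic {d : ℕ} (v : Fin d → ℝ) (S : Set (Fin d → ℝ)) (K : ℝ) :
    IsZdPeriodic (clampLimsup v S K) := by
  intro x k
  unfold clampLimsup
  simp only [disc_periodic v S _ x k]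

lemma measurable_clampLimsup {d : ℕ} (v : Fin d → ℝ) {S : Set (Fin d → ℝ)}
    (hS : MeasurableSet S) (K : ℝ) : Measurable (clampLimsup v S K) :=
  Measurable.limsup fun n =>
    measurable_const.max (measurable_const.min (measurable_disc v hS n))

lemma abs_limsup_le {u : ℕ → ℝ} {K : ℝ} (hu : ∀ n, |u n| ≤ K) :
    |Filter.limsup u Filter.atTop| ≤ K := by
  have hb : Filter.IsBoundedUnder (· ≤ ·) Filter.atTop u :=
    Filter.isBoundedUnder_of ⟨K, fun n => (abs_le.1 (hu n)).2⟩
  have hb' : Filter.IsBoundedUnder (· ≥ ·) Filter.atTop u :=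
    Filter.isBoundedUnder_of ⟨-K, fun n => (abs_le.1 (hu n)).1⟩
  refine abs_le.2 ⟨?_, ?_⟩
  · exact Filter.le_limsup_of_frequently_le
      (Filter.Frequently.of_forall fun n => (abs_le.1 (hu n)).1) hb
  · exact Filter.limsup_le_of_le hb'.isCoboundedUnder_le
      (Filter.Eventually.of_forall fun n => (abs_le.1 (hu n)).2)

lemma abs_clampLimsup_le {d : ℕ} (v : Fin d → ℝ) (S : Set (Fin d → ℝ)) {K : ℝ} (hK : 0 ≤ K)
    (x : Fin d → ℝ) : |clampLimsup v S K x| ≤ K :=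
  abs_limsup_le fun _ => abs_le.2
    ⟨le_max_left _ _, max_le (by linarith) (min_le_left _ _)⟩

/-- Where the truncation has no effect on the orbit, the upper limit of the discrepancies solves
`h(x) = f(x) + h(x + v)`, by passing to the limit in the cocycle relation. -/
lemma clampLimsup_eq {d : ℕ} (v : Fin d → ℝ) (S : Set (Fin d → ℝ)) {K : ℝ} {x : Fin d → ℝ}
    (hx : ∀ n, |disc v S n x| ≤ K) (hxv : ∀ n, |disc v S n (x + v)| ≤ K) :
    clampLimsup v S K x = (multFn S x - (volume S).toReal) + clampLimsup v S K (x + v) := by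
  have hc : ∀ y, (∀ n, |disc v S n y| ≤ K) →
      clampLimsup v S K y = Filter.limsup (fun n => disc v S n y) Filter.atTop := by
    intro y hy
    unfold clampLimsup
    congr 1
    funext n
    rw [min_eq_right (abs_le.1 (hy n)).2, max_eq_right (abs_le.1 (hy n)).1]
  rw [hc x hx, hc _ hxv, ← Filter.limsup_nat_add (fun n => disc v S n x) 1]
  simp only [disc_succ]
  exact limsup_const_add Filter.atTop (fun n => disc v S n (x + v)) _
    (Filter.isBoundedUnder_of ⟨K, fun n => (abs_le.1 (hxv n)).2⟩)
    (Filter.IsBoundedUnder.isCoboundedUnder_le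
      (Filter.isBoundedUnder_of ⟨-K, fun n => (abs_le.1 (hxv n)).1⟩))

lemma ae_translate {d : ℕ} {p : (Fin d → ℝ) → Prop} (hp : ∀ᵐ x, p x) (v : Fin d → ℝ) :
    ∀ᵐ x, p (x + v) :=
  (measurePreserving_add_right volume v).quasiMeasurePreserving.ae hp

lemma disc_telescope {d : ℕ} {v : Fin d → ℝ} {S : Set (Fin d → ℝ)} {g : (Fin d → ℝ) → ℝ}
    {x : Fin d → ℝ}
    (hx : ∀ k : ℕ, multFn S (x + (k : ℝ) • v) - (volume S).toReal
      = g (x + (k : ℝ) • v) - g (x + (k : ℝ) • v - v)) (n : ℕ) :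
    disc v S n x = g (x + (n : ℝ) • v - v) - g (x - v) := by
  induction n with
  | zero => simp [disc]
  | succ n ih =>
    have h : x + ((n + 1 : ℕ) : ℝ) • v - v = x + (n : ℝ) • v := by
      push_cast
      rw [add_smul, one_smul]
      abel
    have h2 : disc v S (n + 1) x
        = disc v S n x + (multFn S (x + (n : ℝ) • v) - (volume S).toReal) := by
      unfold disc
      rw [Finset.sum_range_succ]
      push_cast
      ring
    rw [h, h2, ih, hx n]
    ring

/-- `S` is a bounded remainder set iff there is a bounded measurable function
`g` on the torus satisfying the cohomological equation. -/
theorem stmt12 {d : ℕ} (hd : 1 ≤ d) (α : Fin d → ℝ) (hα : IsIrrationalVector α)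
    (S : Set (Fin d → ℝ)) (hbd : Bornology.IsBounded S) (hmeas : MeasurableSet S) :
    IsBRS α S ↔ ∃ g : (Fin d → ℝ) → ℝ, IsZdPeriodic g ∧ Measurable g ∧
      (∃ M : ℝ, ∀ x, |g x| ≤ M) ∧
      ∀ᵐ x : Fin d → ℝ, multFn S x - (volume S).toReal = g x - g (x - α) := by
  constructor
  · rintro ⟨C, hC⟩
    have hK : ∀ᵐ x : Fin d → ℝ, ∀ n : ℕ, |disc α S n x| ≤ |C| := by
      filter_upwards [hC] with x hx n
      rcases Nat.eq_zero_or_pos n with rfl | hn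
      · simp [disc]
      · exact (hx n hn).trans (le_abs_self C)
    refine ⟨fun x => -clampLimsup α S |C| (x + α), ?_, ?_, ⟨|C|, fun x => ?_⟩, ?_⟩
    · intro x k
      simp only [add_right_comm x _ α, clampLimsup_periodic α S |C| (x + α) k]
    · exact ((measurable_clampLimsup α hmeas |C|).comp (measurable_id.add_const α)).neg
    · rw [abs_neg]
      exact abs_clampLimsup_le α S (abs_nonneg C) _
    · filter_upwards [hK, ae_translate hK α] with x hx hxα
      have h := clampLimsup_eq α S hx hxα
      rw [sub_add_cancel]
      linarith
  · rintro ⟨g, -, -, ⟨M, hM⟩, hg⟩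
    refine ⟨M + M, ?_⟩
    have hall : ∀ᵐ x : Fin d → ℝ, ∀ k : ℕ,
        multFn S (x + (k : ℝ) • α) - (volume S).toReal
          = g (x + (k : ℝ) • α) - g (x + (k : ℝ) • α - α) :=
      ae_all_iff.2 fun k => ae_translate hg ((k : ℝ) • α)
    filter_upwards [hall] with x hx n _
    rw [disc_telescope hx n]
    exact (abs_sub _ _).trans (add_le_add (hM _) (hM _))
end

section
/- Let α be an irrational vector in ℝ^d and let β ∈ ℤα + ℤ^d with β ∉ ℤ^d. If a bounded measurable set S ⊆ ℝ^d is a bounded remainder set with respect to β, then S is also a bounded remainder set with respect to α. -/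
/-!
Write `β = q α + p` with `q ∈ ℤ`, `p ∈ ℤ^d`; then `q ≠ 0` because `β ∉ ℤ^d`. Put
`f = χ_S − Leb S`, which is `ℤ^d`-periodic, so that `f (y + l β) = f (y + l q α)`. Along the
orbit `k ↦ f (x + k α)`, `k ∈ ℤ`, the hypothesis bounds, for almost every `x`, all sums over
finite arithmetic progressions of step `q` (the exceptional null set has only countably many
translates by `ℤα`), and the direction of a progression does not matter, so the step may be taken
to be `|q|`. A block of `n` consecutive terms splits into `|q|` such progressions and fewer than
`|q|` further single terms, which gives the bound `2 |q| C` (`abs_sum_range_le_of_progressions`).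
-/

open MeasureTheory

lemma multFn_add_int {d : ℕ} (S : Set (Fin d → ℝ)) (x : Fin d → ℝ) (p : Fin d → ℤ) :
    multFn S (x + fun i => (p i : ℝ)) = multFn S x := by
  unfold multFn
  rw [← (Equiv.addLeft p).tsum_eq
    (fun k : Fin d → ℤ => Set.indicator S (fun _ => (1 : ℝ)) (x + fun i => (k i : ℝ)))]
  refine tsum_congr fun k => ?_
  congr 1
  ext i
  simp [add_assoc]

lemma disc_eq_sum {d : ℕ} (v : Fin d → ℝ) (S : Set (Fin d → ℝ)) (n : ℕ) (x : Fin d → ℝ) :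
    disc v S n x
      = ∑ k ∈ Finset.range n, (multFn S (x + (k : ℝ) • v) - (volume S).toReal) := by
  simp [disc, Finset.sum_sub_distrib]

lemma sum_range_mul_eq_sum_progressions (F : ℤ → ℝ) (Q m : ℕ) :
    ∑ k ∈ Finset.range (Q * m), F k
      = ∑ j ∈ Finset.range Q, ∑ l ∈ Finset.range m, F (j + l * Q) := by
  induction m with
  | zero => simp
  | succ m ih =>
    rw [Nat.mul_succ, Finset.sum_range_add, ih, ← Finset.sum_add_distrib]
    refine Finset.sum_congr rfl fun j _ => ?_
    rw [Finset.sum_range_succ]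
    congr 2
    push_cast
    ring

/-- Bounded sums along progressions of step `Q > 0` give bounded sums of consecutive terms. -/
lemma abs_sum_range_le_of_progressions (F : ℤ → ℝ) (Q : ℕ) (hQ : 0 < Q) (C : ℝ)
    (h : ∀ (a : ℤ) (n : ℕ), 1 ≤ n → |∑ l ∈ Finset.range n, F (a + l * Q)| ≤ C) (n : ℕ) :
    |∑ k ∈ Finset.range n, F k| ≤ 2 * Q * C := by
  have hC : 0 ≤ C := (abs_nonneg _).trans (h 0 1 le_rfl)
  have h' : ∀ (a : ℤ) (n : ℕ), |∑ l ∈ Finset.range n, F (a + l * Q)| ≤ C := by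
    intro a n
    rcases Nat.eq_zero_or_pos n with rfl | hn
    · simpa using hC
    · exact h a n hn
  have hF : ∀ a : ℤ, |F a| ≤ C := fun a => by simpa using h a 1 le_rfl
  rw [← Nat.div_add_mod n Q, Finset.sum_range_add, sum_range_mul_eq_sum_progressions]
  have h1 : |∑ j ∈ Finset.range Q, ∑ l ∈ Finset.range (n / Q), F (j + l * Q)| ≤ Q * C := by
    refine (Finset.abs_sum_le_sum_abs _ _).trans ?_
    refine (Finset.sum_le_card_nsmul _ _ C fun j _ => h' (j : ℕ) (n / Q)).trans ?_
    simp
  have h2 : |∑ k ∈ Finset.range (n % Q), F ((Q * (n / Q) + k : ℕ) : ℤ)| ≤ Q * C := by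
    refine (Finset.abs_sum_le_sum_abs _ _).trans ?_
    refine (Finset.sum_le_card_nsmul _ _ C fun j _ => hF _).trans ?_
    have : ((n % Q : ℕ) : ℝ) ≤ Q := by exact_mod_cast (Nat.mod_lt n hQ).le
    simpa using mul_le_mul_of_nonneg_right this hC
  refine (abs_add_le _ _).trans ?_
  linarith

/-- if `β ∈ ℤα + ℤ^d`, `β ∉ ℤ^d`, then a BRS with respect to `β` is a BRS
with respect to `α`. -/
theorem stmt14 {d : ℕ} (hd : 1 ≤ d) (α β : Fin d → ℝ) (hα : IsIrrationalVector α)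
    (hβ : β ∈ lat α) (hβ' : ¬∃ p : Fin d → ℤ, β = fun i => (p i : ℝ))
    (S : Set (Fin d → ℝ)) (hbd : Bornology.IsBounded S) (hmeas : MeasurableSet S)
    (hbrs : IsBRS β S) : IsBRS α S := by
  obtain ⟨q, p, rfl⟩ := hβ
  obtain ⟨C, hC⟩ := hbrs
  have hq : q ≠ 0 := by
    rintro rfl
    exact hβ' ⟨p, by simp⟩
  refine ⟨2 * (q.natAbs : ℝ) * C, ?_⟩
  have hall : ∀ᵐ x : Fin d → ℝ, ∀ a : ℤ, ∀ n : ℕ, 1 ≤ n →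
      |disc ((q : ℝ) • α + fun i => (p i : ℝ)) S n (x + (a : ℝ) • α)| ≤ C := by
    rw [ae_all_iff]
    intro a
    exact (measurePreserving_add_right volume ((a : ℝ) • α)).quasiMeasurePreserving.ae hC
  filter_upwards [hall] with x hx n _
  set F : ℤ → ℝ := fun k => multFn S (x + (k : ℝ) • α) - (volume S).toReal with hF
  have key : ∀ (a : ℤ) (n : ℕ), 1 ≤ n → |∑ l ∈ Finset.range n, F (a + l * q)| ≤ C := by
    intro a n hn
    have := hx a n hn
    rw [disc_eq_sum] at this
    convert this using 4 with l hl
    rw [← multFn_add_int S (x + ((a + l * q : ℤ) : ℝ) • α) (fun i => l * p i)]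
    congr 1
    ext i
    simp only [Pi.add_apply, Pi.smul_apply, smul_eq_mul]
    push_cast
    ring
  have key' : ∀ (a : ℤ) (n : ℕ), 1 ≤ n →
      |∑ l ∈ Finset.range n, F (a + l * (q.natAbs : ℤ))| ≤ C := by
    rcases le_total 0 q with h0 | h0
    · rwa [Int.natAbs_of_nonneg h0]
    · intro a n hn
      -- Traverse the progression backwards, starting from its last term.
      rw [← Finset.sum_range_reflect]
      convert key (a + (n - 1) * -q) n hn using 4 with l hl
      have hl' := Finset.mem_range.mp hl
      have e : ((n - 1 - l : ℕ) : ℤ) = n - 1 - l := by omega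
      have e' : (q.natAbs : ℤ) = -q := by omega
      rw [e, e']
      ring
  rw [disc_eq_sum]
  simpa [hF] using
    abs_sum_range_le_of_progressions F q.natAbs (Int.natAbs_pos.mpr hq) C key' n
end

section
/- Let α be an irrational vector in ℝ^d and let v₁, …, v_d be linearly independent vectors in ℝ^d each belonging to ℤα + ℤ^d. Let w₁, …, w_d be vectors with w₁ = v₁ and, for 2 ≤ k ≤ d, w_k ∈ v_k + span{v₁, …, v_{k−1}}. Then w₁, …, w_d are linearly independent and the parallelepiped P spanned by w₁, …, w_d is a bounded remainder set with respect to α. -/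
/-!
Let `P` be the parallelepiped spanned by `w`, and `L` the lattice spanned by `v`, which lies in
`ℤα + ℤ^d`. As `w` is obtained from `v` by a unitriangular matrix, back substitution shows that `w`
is linearly independent and that `P` is a fundamental domain for `L` (`eq_zero_of_mem_paral`,
`exists_add_mem_paral`).

The Birkhoff sum of the multiplicity function of `P` at `x` counts the pairs `(k, r)` in `ℤ × ℤ^d`
with `0 ≤ k < n` and `x + kα + r ∈ P`. For another point `y`, moving each such `(k, r)` by the element
of `L` (lifted to `ℤ × ℤ^d`) that brings `y + kα + r` into `P` is injective, because `P` is a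
fundamental domain. If `y - x` is bounded, so is the lattice element used, hence `k` changes by a
bounded amount; each `k` carries a bounded number of `r`. So Birkhoff sums at points at distance at
most `1` differ by a constant independent of `n` (`birkhoff_le`). Averaging over `y ∈ x + [0, 1)^d`,
where the mean of the multiplicity function is the volume of `P` (`integral_multFn`), bounds the
discrepancy at every `x`.
-/


open MeasureTheory

/-! ### Linear algebra of the triangular change of basis -/

section lattice

variable {d : ℕ} {v w : Fin d → Fin d → ℝ} {a : Fin d → Fin d → ℝ}

/-- The vectors `w` are obtained from `v` by a unitriangular matrix. -/
lemma exists_coeffs (hli : LinearIndependent ℝ v)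
    (hw : ∀ k : Fin d, w k - v k ∈ Submodule.span ℝ (v '' {j : Fin d | j < k})) :
    ∃ a : Fin d → Fin d → ℝ, (∀ k i, ¬ i < k → a k i = 0) ∧
      ∀ k, w k = v k + ∑ i, a k i • v i := by
  rcases Nat.eq_zero_or_pos d with rfl | hd
  · exact ⟨fun _ _ => 0, fun _ _ _ => rfl, fun k => k.elim0⟩
  have : Nonempty (Fin d) := ⟨⟨0, hd⟩⟩
  set b := basisOfLinearIndependentOfCardEqFinrank hli (by simp) with hb
  have hbv : ⇑b = v := by simp [hb]
  refine ⟨fun k i => b.repr (w k - v k) i, fun k i hik => ?_, fun k => ?_⟩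
  · have h := hw k
    rw [← hbv] at h
    have h2 := (b.mem_span_image).1 h
    by_contra h0
    exact hik (h2 (Finsupp.mem_support_iff.2 (by rwa [hbv])))
  · have h := b.sum_repr (w k - v k)
    rw [hbv] at h
    rw [h]; abel

lemma sum_smul_w (ha : ∀ k, w k = v k + ∑ i, a k i • v i) (s : Fin d → ℝ) :
    ∑ k, s k • w k = ∑ i, (s i + ∑ k, s k * a k i) • v i := by
  simp only [ha, smul_add, Finset.sum_add_distrib, add_smul, Finset.sum_smul, Finset.smul_sum,
    smul_smul]
  rw [Finset.sum_comm]

/-- Back substitution: a vector vanishes if each coordinate vanishes as soon as all later ones do. -/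
lemma eq_zero_of_backward {s : Fin d → ℝ} (h : ∀ i, (∀ j, i < j → s j = 0) → s i = 0) :
    ∀ i, s i = 0 := fun i =>
  (wellFounded_gt (α := Fin d)).induction (C := fun i => s i = 0) i fun i ih => h i ih

lemma linearIndependent_w (hli : LinearIndependent ℝ v) (ha0 : ∀ k i, ¬ i < k → a k i = 0)
    (ha : ∀ k, w k = v k + ∑ i, a k i • v i) : LinearIndependent ℝ w := by
  rw [Fintype.linearIndependent_iff] at hli ⊢
  intro s hs
  rw [sum_smul_w ha] at hs
  have h := hli _ hs
  refine eq_zero_of_backward fun i hi => ?_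
  have h1 := h i
  rwa [Finset.sum_eq_zero, add_zero] at h1
  intro k _
  by_cases hk : i < k
  · rw [hi k hk, zero_mul]
  · rw [ha0 k i hk, mul_zero]

/-- Uniqueness half of the fact that `paral w` is a fundamental domain for the lattice spanned by
`v`: back substitution from the last coordinate, where at each step an integer equals a
difference of two numbers of `[0, 1)`. -/
lemma eq_zero_of_mem_paral (hli : LinearIndependent ℝ v) (ha0 : ∀ k i, ¬ i < k → a k i = 0)
    (ha : ∀ k, w k = v k + ∑ i, a k i • v i) {z : Fin d → ℝ} {m : Fin d → ℤ}
    (hz : z ∈ paral w) (hz' : z + ∑ j, (m j : ℝ) • v j ∈ paral w) : m = 0 := by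
  obtain ⟨t, ht, rfl⟩ := hz
  obtain ⟨t', ht', h⟩ := hz'
  have e : ∑ k, (t' k - t k) • w k = ∑ j, (m j : ℝ) • v j := by
    simp only [sub_smul, Finset.sum_sub_distrib]
    rw [← h]; abel
  rw [sum_smul_w ha] at e
  have e' : ∀ i, t' i - t i + ∑ k, (t' k - t k) * a k i = m i := by
    have := (Fintype.linearIndependent_iff.1 hli)
      (fun i => t' i - t i + ∑ k, (t' k - t k) * a k i - m i)
      (by simp only [sub_smul _ ((m _ : ℤ) : ℝ), Finset.sum_sub_distrib]; rw [e, sub_self])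
    exact fun i => sub_eq_zero.1 (this i)
  have hs : ∀ i, t' i - t i = 0 := by
    refine eq_zero_of_backward (s := fun i => t' i - t i) fun i hi => ?_
    have h1 := e' i
    rw [Finset.sum_eq_zero, add_zero] at h1
    · have h2 := ht i
      have h3 := ht' i
      have h4 : ((m i : ℤ) : ℝ) < 1 := by linarith
      have h5 : (-1 : ℝ) < m i := by linarith
      have h6 : m i < 1 := by exact_mod_cast h4
      have h7 : -1 < m i := by exact_mod_cast h5
      have h8 : m i = 0 := by omega
      simp only [h1, h8, Int.cast_zero]
    · intro k _
      by_cases hk : i < k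
      · rw [hi k hk, zero_mul]
      · rw [ha0 k i hk, mul_zero]
  funext i
  have := e' i
  simp only [hs, zero_mul, Finset.sum_const_zero, add_zero] at this
  exact_mod_cast this.symm

/-- Existence half of the fact that `paral w` is a fundamental domain for the lattice spanned by
`v`. -/
lemma exists_add_mem_paral (hli : LinearIndependent ℝ v) (ha0 : ∀ k i, ¬ i < k → a k i = 0)
    (ha : ∀ k, w k = v k + ∑ i, a k i • v i) (z : Fin d → ℝ) :
    ∃ m : Fin d → ℤ, z + ∑ j, (m j : ℝ) • v j ∈ paral w := by
  obtain ⟨c, rfl⟩ : ∃ c : Fin d → ℝ, ∑ j, c j • v j = z := by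
    rcases Nat.eq_zero_or_pos d with rfl | hd
    · exact ⟨z, Subsingleton.elim _ _⟩
    have : Nonempty (Fin d) := ⟨⟨0, hd⟩⟩
    have h := (basisOfLinearIndependentOfCardEqFinrank hli (by simp)).sum_repr z
    rw [coe_basisOfLinearIndependentOfCardEqFinrank] at h
    exact ⟨_, h⟩
  -- The `w`-coordinates `t` of the representative, by recursion from the last index downwards:
  -- the `v`-coordinate `t i + ∑ k, t k * a k i` must differ from `c i` by an integer.
  obtain ⟨t, ht⟩ : ∃ t : Fin d → ℝ, ∀ i, t i = Int.fract (c i - ∑ k, t k * a k i) := by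
    let G : (i : Fin d) → ((j : Fin d) → j > i → ℝ) → ℝ := fun i t =>
      Int.fract (c i - ∑ k, if h : i < k then t k h * a k i else 0)
    refine ⟨(wellFounded_gt (α := Fin d)).fix G, fun i => ?_⟩
    rw [WellFounded.fix_eq]
    simp only [G]
    congr 2
    refine Finset.sum_congr rfl fun k _ => ?_
    split_ifs with h
    · rfl
    · rw [ha0 k i h, mul_zero]
  refine ⟨fun i => -⌊c i - ∑ k, t k * a k i⌋, t, fun k => ?_, ?_⟩
  · rw [ht k]
    exact ⟨Int.fract_nonneg _, Int.fract_lt_one _⟩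
  · rw [sum_smul_w ha, ← Finset.sum_add_distrib]
    refine Finset.sum_congr rfl fun i _ => ?_
    rw [← add_smul]
    congr 1
    have h1 := ht i
    rw [Int.fract] at h1
    push_cast
    linarith

lemma paral_eq_fundamentalDomain (b : Module.Basis (Fin d) ℝ (Fin d → ℝ)) :
    paral b = ZSpan.fundamentalDomain b := by
  ext x
  rw [ZSpan.mem_fundamentalDomain]
  constructor
  · rintro ⟨t, ht, rfl⟩ i
    rw [b.repr_sum_self]
    exact ht i
  · intro h
    exact ⟨fun k => b.repr x k, h, (b.sum_repr x).symm⟩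

end lattice

/-! ### The mean of the multiplicity function -/

section counting

variable {d : ℕ}

/-- The half-open unit cube `[0, 1)^d`, a fundamental domain for `ℤ^d`. -/
def unitBox (d : ℕ) : Set (Fin d → ℝ) := Set.univ.pi fun _ => Set.Ico 0 1

lemma volume_unitBox : volume (unitBox d) = 1 := by
  rw [unitBox, volume_pi_pi]; simp

lemma measurableSet_unitBox : MeasurableSet (unitBox d) :=
  MeasurableSet.univ_pi fun _ => measurableSet_Ico

/-- The multiplicity function `multFn` with values in `[0, ∞]`, for which no summability is
needed. -/
noncomputable def emult (S : Set (Fin d → ℝ)) (x : Fin d → ℝ) : ENNReal :=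
  ∑' k : Fin d → ℤ, S.indicator (fun _ => (1 : ENNReal)) (x + fun i => (k i : ℝ))

lemma measurable_emult {S : Set (Fin d → ℝ)} (hS : MeasurableSet S) : Measurable (emult S) := by
  refine Measurable.tsum fun k => ?_
  exact (measurable_const.indicator hS).comp (measurable_id.add_const _)

lemma multFn_eq_toReal (S : Set (Fin d → ℝ)) (x : Fin d → ℝ) :
    multFn S x = (emult S x).toReal := by
  rw [multFn, emult, ENNReal.tsum_toReal_eq]
  · refine tsum_congr fun k => ?_
    simp only [Set.indicator]
    split_ifs <;> simp
  · intro k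
    simp only [Set.indicator]
    split_ifs <;> simp

/-- Unfolding: the translate of `S` by `-z` is cut along the integer translates of the unit cube. -/
lemma lintegral_emult {S : Set (Fin d → ℝ)} (hS : MeasurableSet S) (z : Fin d → ℝ) :
    ∫⁻ u in unitBox d, emult S (z + u) = volume S := by
  let fl : (Fin d → ℝ) → (Fin d → ℤ) := fun u i => ⌊u i⌋
  have hfl : Measurable fl :=
    measurable_pi_lambda _ fun i => Int.measurable_floor.comp (measurable_pi_apply i)
  have hS' : MeasurableSet ((fun u => z + u) ⁻¹' S) := (measurable_const_add z) hS
  have h1 : volume S = volume ((fun u => z + u) ⁻¹' S) := (measure_preimage_add _ z S).symm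
  have h2 : volume ((fun u => z + u) ⁻¹' S)
      = ∑' k, volume (((fun u => z + u) ⁻¹' S) ∩ fl ⁻¹' {k}) := by
    rw [← measure_iUnion]
    · congr 1
      ext u; simp
    · intro k l hkl
      refine Set.disjoint_left.2 fun u hu hu' => hkl ?_
      exact (Set.mem_singleton_iff.1 hu.2).symm.trans hu'.2
    · exact fun k => hS'.inter (hfl (measurableSet_singleton k))
  unfold emult
  rw [lintegral_tsum, h1, h2]
  · refine tsum_congr fun k => ?_
    set kk : Fin d → ℝ := fun i => (k i : ℝ) with hkk
    have e : (fun u => S.indicator (fun _ => (1 : ENNReal)) (z + u + kk))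
        = ((fun u => z + u + kk) ⁻¹' S).indicator 1 := by
      rfl
    have hm : MeasurableSet ((fun u => z + u + kk) ⁻¹' S) :=
      ((measurable_const_add z).add_const kk) hS
    rw [e, lintegral_indicator_one hm, Measure.restrict_apply hm,
      ← measure_preimage_add_right volume kk (_ ∩ fl ⁻¹' {k})]
    congr 1
    ext u
    simp only [Set.mem_inter_iff, Set.mem_preimage, unitBox, Set.mem_univ_pi, add_assoc,
      Set.mem_singleton_iff, fl, funext_iff, Pi.add_apply, hkk, Int.floor_add_intCast,
      Set.mem_Ico, add_eq_right, Int.floor_eq_zero_iff]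
  · intro k
    exact ((measurable_const.indicator hS).comp
      ((measurable_const_add z).add_const _)).aemeasurable

lemma integral_multFn {S : Set (Fin d → ℝ)} (hS : MeasurableSet S) (hS' : volume S ≠ ⊤)
    (z : Fin d → ℝ) :
    Integrable (fun u => multFn S (z + u)) (volume.restrict (unitBox d)) ∧
    ∫ u in unitBox d, multFn S (z + u) = (volume S).toReal := by
  have hm : Measurable fun u => emult S (z + u) :=
    (measurable_emult hS).comp (measurable_const_add z)
  have hl := lintegral_emult hS z
  simp only [multFn_eq_toReal]
  constructor
  · exact integrable_toReal_of_lintegral_ne_top hm.aemeasurable (by rwa [hl])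
  · rw [integral_toReal hm.aemeasurable, hl]
    exact ae_lt_top hm (by rwa [hl])

/-! ### Comparison of Birkhoff sums at nearby points -/

/-- A translate of a bounded set contains a uniformly bounded number of integer points. -/
lemma exists_finset {S : Set (Fin d → ℝ)} {R : ℝ} (hR : ∀ x ∈ S, ‖x‖ ≤ R) :
    ∃ B : ℕ, ∀ x : Fin d → ℝ, ∃ F : Finset (Fin d → ℤ),
      (∀ p, p ∈ F ↔ x + (fun i => (p i : ℝ)) ∈ S) ∧ F.card ≤ B := by
  classical
  set N : ℕ := ⌈R⌉₊ + 1 with hN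
  refine ⟨(2 * N + 1) ^ d, fun x => ?_⟩
  let c : Fin d → ℤ := fun i => -⌊x i⌋
  let K : Finset (Fin d → ℤ) := Finset.Icc (fun i => c i - N) (fun i => c i + N)
  refine ⟨K.filter fun p => x + (fun i => (p i : ℝ)) ∈ S, fun p => ?_, ?_⟩
  · rw [Finset.mem_filter, and_iff_right_iff_imp]
    intro hp
    have h1 := hR _ hp
    have key : ∀ i, c i - N ≤ p i ∧ p i ≤ c i + N := by
      intro i
      have h2 := (norm_le_pi_norm _ i).trans h1
      rw [Real.norm_eq_abs, abs_le, Pi.add_apply] at h2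
      have h3 := Int.floor_le (x i)
      have h4 := Int.lt_floor_add_one (x i)
      have h5 := Nat.le_ceil R
      constructor
      · have : (c i : ℝ) - N ≤ p i := by simp only [c, hN]; push_cast; linarith
        exact_mod_cast this
      · have : (p i : ℝ) ≤ c i + N := by simp only [c, hN]; push_cast; linarith
        exact_mod_cast this
    exact Finset.mem_Icc.2 ⟨fun i => (key i).1, fun i => (key i).2⟩
  · refine (Finset.card_filter_le _ _).trans ?_
    simp only [K, Pi.card_Icc, Int.card_Icc]
    rw [Finset.prod_congr rfl (g := fun _ => 2 * N + 1), Finset.prod_const, Finset.card_univ,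
      Fintype.card_fin]
    intro i _
    omega

lemma multFn_eq_card {S : Set (Fin d → ℝ)} {x : Fin d → ℝ} {F : Finset (Fin d → ℤ)}
    (hF : ∀ p, p ∈ F ↔ x + (fun i => (p i : ℝ)) ∈ S) : multFn S x = F.card := by
  rw [multFn, tsum_eq_sum (s := F)]
  · rw [Finset.sum_congr rfl (g := fun _ => (1 : ℝ))]
    · simp
    · intro p hp
      exact Set.indicator_of_mem ((hF p).1 hp) _
  · intro p hp
    exact Set.indicator_of_notMem (fun h => hp ((hF p).2 h)) _

lemma sum_range_eq (f : ℤ → ℕ) (n : ℕ) :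
    ∑ k ∈ Finset.range n, f k = ∑ k ∈ Finset.Ico (0 : ℤ) n, f k := by
  refine Finset.sum_nbij' (fun k => (k : ℤ)) Int.toNat ?_ ?_ ?_ ?_ ?_ <;> intros <;> simp_all

lemma sum_Ico_le (f : ℤ → ℕ) (n M B : ℕ) (hf : ∀ k, f k ≤ B) :
    ∑ k ∈ Finset.Ico (-M : ℤ) (n + M), f k ≤ ∑ k ∈ Finset.range n, f k + 2 * M * B := by
  have hs : Finset.Ico (-M : ℤ) (n + M) ⊆
      Finset.Ico (0 : ℤ) n ∪ (Finset.Ico (-M : ℤ) 0 ∪ Finset.Ico (n : ℤ) (n + M)) := by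
    intro k
    simp only [Finset.mem_union, Finset.mem_Ico]
    omega
  have h1 : ∀ s : Finset ℤ, ∑ k ∈ s, f k ≤ s.card * B := fun s => by
    simpa using Finset.sum_le_card_nsmul s f B fun k _ => hf k
  have hu : ∀ s t : Finset ℤ, ∑ k ∈ s ∪ t, f k ≤ ∑ k ∈ s, f k + ∑ k ∈ t, f k := fun s t => by
    rw [← Finset.sum_union_inter]; exact Nat.le_add_right _ _
  rw [sum_range_eq]
  refine (Finset.sum_le_sum_of_subset hs).trans ((hu _ _).trans (Nat.add_le_add_left ?_ _))
  refine (hu _ _).trans ((Nat.add_le_add (h1 _) (h1 _)).trans (le_of_eq ?_))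
  simp
  ring

/-- If `S` is a fundamental domain for the lattice spanned by vectors `v j = q j • α + p j` of
`ℤα + ℤ^d`, then Birkhoff sums of its multiplicity function at `x` and `y` compare, up to an error
independent of `n`. The sum at `x` counts the pairs `(k, r) ∈ ℤ × ℤ^d` with `0 ≤ k < n` and
`x + kα + r ∈ S`. Adding to `(k, r)` the combination of the `(q j, p j)` that brings
`y + kα + r` back into `S` is injective, and changes `k` by at most `M`. -/
lemma birkhoff_le {α : Fin d → ℝ} {S : Set (Fin d → ℝ)} {q : Fin d → ℤ} {p : Fin d → Fin d → ℤ}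
    {v : Fin d → Fin d → ℝ} (hv : ∀ j, v j = (q j : ℝ) • α + fun i => (p j i : ℝ))
    (hex : ∀ z, ∃ m : Fin d → ℤ, z + ∑ j, (m j : ℝ) • v j ∈ S)
    (huniq : ∀ z (m : Fin d → ℤ), z ∈ S → z + ∑ j, (m j : ℝ) • v j ∈ S → m = 0)
    {M B : ℕ} {F : (Fin d → ℝ) → Finset (Fin d → ℤ)}
    (hF : ∀ x p, p ∈ F x ↔ x + (fun i => (p i : ℝ)) ∈ S) (hB : ∀ x, (F x).card ≤ B)
    {x y : Fin d → ℝ}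
    (hM : ∀ z (m : Fin d → ℤ), z ∈ S → z + (y - x) + ∑ j, (m j : ℝ) • v j ∈ S →
      |∑ j, m j * q j| ≤ M) (n : ℕ) :
    ∑ k ∈ Finset.range n, multFn S (x + (k : ℝ) • α)
      ≤ ∑ k ∈ Finset.range n, multFn S (y + (k : ℝ) • α) + 2 * M * B := by
  classical
  let f : (Fin d → ℝ) → ℤ → ℕ := fun x k => (F (x + (k : ℝ) • α)).card
  have hf : ∀ x, ∑ k ∈ Finset.range n, multFn S (x + (k : ℝ) • α)
      = ((∑ k ∈ Finset.range n, f x k : ℕ) : ℝ) := by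
    intro x
    push_cast
    refine Finset.sum_congr rfl fun k _ => ?_
    rw [multFn_eq_card (hF _)]
    simp [f]
  rw [hf, hf]
  have key : ∑ k ∈ Finset.range n, f x k ≤ ∑ k ∈ Finset.Ico (-M : ℤ) (n + M), f y k := by
    rw [sum_range_eq]
    simp only [f]
    rw [← Finset.card_sigma, ← Finset.card_sigma]
    choose m hm using hex
    -- `pt (k, r) = kα + r`, and `Φ` is the injection between the two sets of pairs.
    let pt : (_ : ℤ) × (Fin d → ℤ) → Fin d → ℝ := fun γ => (γ.1 : ℝ) • α + fun i => (γ.2 i : ℝ)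
    let mm : (_ : ℤ) × (Fin d → ℤ) → Fin d → ℤ := fun γ => m (y + pt γ)
    let Φ : (_ : ℤ) × (Fin d → ℤ) → (_ : ℤ) × (Fin d → ℤ) := fun γ =>
      ⟨γ.1 + ∑ j, mm γ j * q j, fun i => γ.2 i + ∑ j, mm γ j * p j i⟩
    have hpt : ∀ (γ : (_ : ℤ) × (Fin d → ℤ)) (l : Fin d → ℤ),
        pt ⟨γ.1 + ∑ j, l j * q j, fun i => γ.2 i + ∑ j, l j * p j i⟩
          = pt γ + ∑ j, (l j : ℝ) • v j := by
      intro γ l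
      funext i
      simp only [pt, hv, Pi.add_apply, Pi.smul_apply, smul_eq_mul, Finset.sum_apply]
      push_cast
      simp only [mul_add, add_mul, Finset.sum_add_distrib, Finset.sum_mul, mul_assoc]
      ring
    have hΦ : ∀ γ, y + pt (Φ γ) ∈ S := by
      intro γ
      rw [hpt γ (mm γ), ← add_assoc]
      exact hm _
    have hmem : ∀ (x : Fin d → ℝ) (γ : (_ : ℤ) × (Fin d → ℤ)),
        γ.2 ∈ F (x + (γ.1 : ℝ) • α) ↔ x + pt γ ∈ S := by
      intro x γ
      rw [hF, add_assoc]
    refine Finset.card_le_card_of_injOn Φ ?_ ?_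
    · intro γ hγ
      rw [Finset.mem_coe, Finset.mem_sigma, hmem, Finset.mem_Ico] at hγ
      rw [Finset.mem_coe, Finset.mem_sigma, hmem, Finset.mem_Ico]
      refine ⟨?_, hΦ γ⟩
      have h1 := hM (x + pt γ) (mm γ) hγ.2 (by
        have := hΦ γ
        rw [hpt γ (mm γ)] at this
        convert this using 1
        abel)
      rw [abs_le] at h1
      simp only [Φ]
      omega
    · intro γ hγ γ' hγ' h
      rw [Finset.mem_coe, Finset.mem_sigma, hmem] at hγ hγ'
      have e1 : γ.1 + ∑ j, mm γ j * q j = γ'.1 + ∑ j, mm γ' j * q j := congrArg Sigma.fst h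
      have e2 : ∀ i, γ.2 i + ∑ j, mm γ j * p j i = γ'.2 i + ∑ j, mm γ' j * p j i :=
        fun i => congrFun (congrArg (fun g : (_ : ℤ) × (Fin d → ℤ) => g.2) h) i
      have e3 := congrArg pt h
      simp only [Φ] at e3
      rw [hpt, hpt] at e3
      -- The same lattice vector was added to both pairs, so the pairs agree.
      have h0 : mm γ - mm γ' = 0 := by
        refine huniq (x + pt γ) _ hγ.2 ?_
        have : x + pt γ + ∑ j, (((mm γ - mm γ') j : ℤ) : ℝ) • v j = x + pt γ' := by
          simp only [Pi.sub_apply, Int.cast_sub, sub_smul, Finset.sum_sub_distrib]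
          rw [add_assoc, ← add_sub_assoc, e3, add_sub_cancel_right]
        rw [this]
        exact hγ'.2
      rw [sub_eq_zero.1 h0] at e1 e2
      refine Sigma.ext (add_right_cancel e1) (heq_of_eq ?_)
      funext i
      exact add_right_cancel (e2 i)
  have := key.trans (sum_Ico_le (f y) n M B fun k => hB _)
  exact_mod_cast this

end counting

/-! ### Conclusion -/

/-- if `w₁ = v₁` and `w_k ∈ v_k + span{v₁,…,v_{k−1}}` for vectors
`v₁,…,v_d ∈ ℤα + ℤ^d` which are linearly independent, then `w₁,…,w_d` are linearly
independent and the parallelepiped they span is a bounded remainder set. -/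
theorem stmt16 {d : ℕ} (hd : 1 ≤ d) (α : Fin d → ℝ) (hα : IsIrrationalVector α)
    (v : Fin d → Fin d → ℝ) (hli : LinearIndependent ℝ v) (hv : ∀ k, v k ∈ lat α)
    (w : Fin d → Fin d → ℝ)
    (hw : ∀ k : Fin d, w k - v k ∈ Submodule.span ℝ (v '' {j : Fin d | j < k})) :
    LinearIndependent ℝ w ∧ IsBRS α (paral w) := by
  obtain ⟨a, ha0, ha⟩ := exists_coeffs hli hw
  have hwli := linearIndependent_w hli ha0 ha
  refine ⟨hwli, ?_⟩
  have : Nonempty (Fin d) := ⟨⟨0, hd⟩⟩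
  set b := basisOfLinearIndependentOfCardEqFinrank hwli (by simp) with hb
  have hbw : ⇑b = w := by simp [hb]
  have hP : paral w = ZSpan.fundamentalDomain b := by
    rw [← paral_eq_fundamentalDomain, hbw]
  have hmeas : MeasurableSet (paral w) := by
    rw [hP]; exact ZSpan.fundamentalDomain_measurableSet b
  have hbdd : Bornology.IsBounded (paral w) := by
    rw [hP]; exact ZSpan.fundamentalDomain_isBounded b
  have hfin : volume (paral w) ≠ ⊤ := hbdd.measure_lt_top.ne
  obtain ⟨R, hR⟩ := hbdd.exists_norm_le
  choose q p hqp using hv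
  obtain ⟨B, hB⟩ := exists_finset hR
  choose F hF hFB using hB
  let bv := basisOfLinearIndependentOfCardEqFinrank hli (by simp)
  -- The functional `ℓ` reads off the coefficient of `α` on the lattice spanned by `v`; continuity
  -- bounds that coefficient for lattice vectors joining points of a bounded set.
  let ℓ : (Fin d → ℝ) →L[ℝ] ℝ :=
    LinearMap.toContinuousLinearMap (bv.constr ℝ fun j => (q j : ℝ))
  have hℓ : ∀ j, ℓ (v j) = q j := by
    intro j
    have h := bv.constr_basis ℝ (fun j => (q j : ℝ)) j
    rwa [coe_basisOfLinearIndependentOfCardEqFinrank] at h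
  obtain ⟨M, hM⟩ := exists_nat_ge (‖ℓ‖ * (R + R + 1))
  have hMb : ∀ (u : Fin d → ℝ), ‖u‖ ≤ 1 → ∀ z (m : Fin d → ℤ), z ∈ paral w →
      z + u + ∑ j, (m j : ℝ) • v j ∈ paral w → |∑ j, m j * q j| ≤ M := by
    intro u hu z m hz hz'
    set z' := z + u + ∑ j, (m j : ℝ) • v j with hzd
    have e : ((∑ j, m j * q j : ℤ) : ℝ) = ℓ (z' - z - u) := by
      have : z' - z - u = ∑ j, (m j : ℝ) • v j := by rw [hzd]; abel
      rw [this, map_sum]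
      push_cast
      exact Finset.sum_congr rfl fun j _ => by rw [map_smul, hℓ, smul_eq_mul]
    have h1 : ‖z' - z - u‖ ≤ R + R + 1 :=
      by linarith [norm_sub_le (z' - z) u, norm_sub_le z' z, hR _ hz', hR _ hz]
    have h2 : |((∑ j, m j * q j : ℤ) : ℝ)| ≤ M := by
      rw [e, ← Real.norm_eq_abs]
      exact (ℓ.le_opNorm _).trans
        ((mul_le_mul_of_nonneg_left h1 (norm_nonneg _)).trans hM)
    exact_mod_cast h2
  refine ⟨2 * M * B, Filter.Eventually.of_forall fun x n _ => ?_⟩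
  have hcmp : ∀ x y : Fin d → ℝ, ‖y - x‖ ≤ 1 → _ := fun x y hxy =>
    birkhoff_le hqp (exists_add_mem_paral hli ha0 ha)
      (fun z m => eq_zero_of_mem_paral hli ha0 ha) hF hFB (hMb (y - x) hxy) n
  -- Averaging the comparison of `x` with `x + u` over the unit cube replaces the second sum by its
  -- mean, `n * volume (paral w)`.
  let μ := (volume : Measure (Fin d → ℝ)).restrict (unitBox d)
  have : IsProbabilityMeasure μ := ⟨by simp [μ, volume_unitBox]⟩
  let T : (Fin d → ℝ) → ℝ := fun x => ∑ k ∈ Finset.range n, multFn (paral w) (x + (k : ℝ) • α)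
  have hsw : (fun u => T (x + u))
      = fun u => ∑ k ∈ Finset.range n, multFn (paral w) ((x + (k : ℝ) • α) + u) := by
    funext u
    exact Finset.sum_congr rfl fun k _ => by rw [add_right_comm]
  have hTi : Integrable (fun u => T (x + u)) μ := by
    rw [hsw]
    exact integrable_finsetSum _ fun k _ => (integral_multFn hmeas hfin _).1
  have hT : ∫ u, T (x + u) ∂μ = n * (volume (paral w)).toReal := by
    rw [hsw, integral_finsetSum _ fun k _ => (integral_multFn hmeas hfin _).1,
      Finset.sum_congr rfl fun k _ => (integral_multFn hmeas hfin _).2]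
    simp
  have hbox : ∀ u ∈ unitBox d, ‖u‖ ≤ 1 := by
    intro u hu
    refine (pi_norm_le_iff_of_nonneg zero_le_one).2 fun i => ?_
    have := hu i (Set.mem_univ i)
    rw [Real.norm_eq_abs, abs_of_nonneg this.1]
    exact this.2.le
  have h1 : T x - 2 * M * B ≤ ∫ u, T (x + u) ∂μ := by
    have h := integral_mono_ae (μ := μ) (integrable_const (T x - 2 * M * B)) hTi
      ((ae_restrict_iff' measurableSet_unitBox).2 (Filter.Eventually.of_forall fun u hu => by
        have := hcmp x (x + u) (by simpa using hbox u hu)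
        simp only [T]
        linarith))
    simpa using h
  have h2 : ∫ u, T (x + u) ∂μ ≤ T x + 2 * M * B := by
    have h := integral_mono_ae (μ := μ) hTi (integrable_const (T x + 2 * M * B))
      ((ae_restrict_iff' measurableSet_unitBox).2 (Filter.Eventually.of_forall fun u hu => by
        have := hcmp (x + u) x (by simpa using hbox u hu)
        simp only [T]
        linarith))
    simpa using h
  rw [hT] at h1 h2
  rw [disc, abs_le]
  constructor <;> simp only [T] at h1 h2 <;> linarith
end

section
/- Let α be an irrational vector in ℝ^d, and let S and S′ be two bounded measurable sets in ℝ^d which are equidecomposable using only translations by vectors in ℤα + ℤ^d. If S is a bounded remainder set with respect to α, then so is S′. -/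
/-!
Write `S` as an almost disjoint union of pieces `A i` and `S'` as the almost disjoint union of
the translates `A i + γ i` with `γ i = q i • α + p i`. Intersecting the pieces with `S` makes them
bounded, so the multiplicity function of each piece is bounded (`exists_multFn_bound`) and, almost
everywhere, `χ_S = ∑ χ_{A i}` and `χ_{S'} = ∑ χ_{A i}(· - q i • α)` (`ae_multFn_eq_sum`,
`multFn_translate`). Along an orbit of the rotation, the Birkhoff sums of `χ_{A i}` and of
`χ_{A i}(· - q i • α)` differ only in their `|q i|` first and last terms, so they stay at bounded
distance (`abs_sum_shift_sub_le`). As `S` and `S'` have the same measure, their discrepancies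
stay at bounded distance.
-/

open MeasureTheory

section Aux

variable {d : ℕ}

/-- The number of points of the coset `x + ℤ^d` in a bounded set is bounded uniformly in `x`: they
lie in a cube of side `2R`. This makes the series defining `multFn` a finite sum with a uniformly
bounded number of nonzero terms. -/
lemma exists_int_points_bound {B : Set (Fin d → ℝ)} (hB : Bornology.IsBounded B) :
    ∃ M : ℕ, ∀ x : Fin d → ℝ, ∃ F : Finset (Fin d → ℤ), F.card ≤ M ∧
      ∀ k : Fin d → ℤ, (x + fun i => (k i : ℝ)) ∈ B → k ∈ F := by
  obtain ⟨R, hR⟩ := hB.exists_norm_le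
  refine ⟨∏ _i : Fin d, (⌈2 * R⌉ + 1).toNat, fun x =>
    ⟨Fintype.piFinset fun i => Finset.Icc ⌈-R - x i⌉ ⌊R - x i⌋, ?_, ?_⟩⟩
  · rw [Fintype.card_piFinset]
    refine Finset.prod_le_prod' fun i _ => ?_
    rw [Int.card_Icc]
    refine Int.toNat_le_toNat ?_
    have h : ⌊R - x i⌋ - ⌈-R - x i⌉ ≤ ⌈2 * R⌉ := by
      have h1 := Int.floor_le (R - x i)
      have h2 := Int.le_ceil (-R - x i)
      have h3 := Int.le_ceil (2 * R)
      have : ((⌊R - x i⌋ - ⌈-R - x i⌉ : ℤ) : ℝ) ≤ (⌈2 * R⌉ : ℤ) := by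
        push_cast; linarith
      exact_mod_cast this
    omega
  · intro k hk
    rw [Fintype.mem_piFinset]
    intro i
    have h := (norm_le_pi_norm _ i).trans (hR _ hk)
    rw [Real.norm_eq_abs, abs_le] at h
    simp only [Pi.add_apply] at h
    rw [Finset.mem_Icc, Int.ceil_le, Int.le_floor]
    constructor <;> linarith [h.1, h.2]

lemma summable_mult {B : Set (Fin d → ℝ)} (hB : Bornology.IsBounded B) (x : Fin d → ℝ) :
    Summable fun k : Fin d → ℤ =>
      Set.indicator B (fun _ => (1 : ℝ)) (x + fun i => (k i : ℝ)) := by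
  obtain ⟨M, hM⟩ := exists_int_points_bound hB
  obtain ⟨F, -, hF⟩ := hM x
  exact summable_of_ne_finset_zero (s := F) fun k hk =>
    Set.indicator_of_notMem (fun h => hk (hF k h)) _

lemma exists_multFn_bound {B : Set (Fin d → ℝ)} (hB : Bornology.IsBounded B) :
    ∃ M : ℝ, ∀ x, |multFn B x| ≤ M := by
  obtain ⟨M, hM⟩ := exists_int_points_bound hB
  refine ⟨M, fun x => ?_⟩
  obtain ⟨F, hc, hF⟩ := hM x
  unfold multFn
  rw [tsum_eq_sum (s := F) fun k hk => Set.indicator_of_notMem (fun h => hk (hF k h)) _]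
  refine (Finset.abs_sum_le_sum_abs _ _).trans ?_
  calc _ ≤ ∑ _k ∈ F, (1 : ℝ) := by
        refine Finset.sum_le_sum fun k _ => ?_
        by_cases h : (x + fun i => (k i : ℝ)) ∈ B <;> simp [h]
    _ = F.card := by simp
    _ ≤ M := by exact_mod_cast hc

/-- The integer part `p` of a translation vector does not affect the multiplicity function. -/
lemma multFn_translate (B : Set (Fin d → ℝ)) (α : Fin d → ℝ) (q : ℤ) (p : Fin d → ℤ)
    (x : Fin d → ℝ) :
    multFn ((fun y => y - ((q : ℝ) • α + fun i => (p i : ℝ))) ⁻¹' B) x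
      = multFn B (x - (q : ℝ) • α) := by
  unfold multFn
  rw [← (Equiv.addRight p).tsum_eq]
  refine tsum_congr fun k => ?_
  have : (x + fun i => (((Equiv.addRight p) k i : ℤ) : ℝ)) - ((q : ℝ) • α + fun i => (p i : ℝ))
      = x - (q : ℝ) • α + fun i => (k i : ℝ) := by
    ext i
    simp only [Equiv.coe_addRight, Pi.add_apply, Pi.sub_apply]
    push_cast
    ring
  rw [← this]
  rfl

lemma ae_add_right {P : (Fin d → ℝ) → Prop} (h : ∀ᵐ x, P x) (v : Fin d → ℝ) :
    ∀ᵐ x, P (x + v) :=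
  (measurePreserving_add_right volume v).quasiMeasurePreserving.ae h

/-- The multiplicity function is additive over almost disjoint bounded pieces; boundedness allows
exchanging the two sums. -/
lemma ae_multFn_eq_sum {N : ℕ} {T : Set (Fin d → ℝ)} {C : Fin N → Set (Fin d → ℝ)}
    (hC : ∀ i, Bornology.IsBounded (C i))
    (hT : ∀ᵐ x, x ∈ T ↔ ∃ i, x ∈ C i)
    (hdisj : ∀ᵐ x, ∀ i j, i ≠ j → ¬ (x ∈ C i ∧ x ∈ C j)) :
    ∀ᵐ x, multFn T x = ∑ i, multFn (C i) x := by
  have key : ∀ᵐ x, Set.indicator T (fun _ => (1 : ℝ)) x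
      = ∑ i, Set.indicator (C i) (fun _ => (1 : ℝ)) x := by
    filter_upwards [hT, hdisj] with x h1 h2
    by_cases hx : x ∈ T
    · obtain ⟨i, hi⟩ := h1.1 hx
      rw [Finset.sum_eq_single i]
      · simp [hx, hi]
      · intro j _ hj
        exact Set.indicator_of_notMem (fun h => h2 j i hj ⟨h, hi⟩) _
      · simp
    · rw [Set.indicator_of_notMem hx, Finset.sum_eq_zero]
      intro i _
      exact Set.indicator_of_notMem (fun h => hx (h1.2 ⟨i, h⟩)) _
  have key2 := ae_all_iff.2 fun k : Fin d → ℤ => ae_add_right key (fun i => (k i : ℝ))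
  filter_upwards [key2] with x hx
  unfold multFn
  rw [tsum_congr hx, Summable.tsum_finsetSum fun i _ => summable_mult (hC i) x]

lemma volume_eq_sum {N : ℕ} {T : Set (Fin d → ℝ)} {C : Fin N → Set (Fin d → ℝ)}
    (hC : ∀ i, MeasurableSet (C i))
    (hT : ∀ᵐ x, x ∈ T ↔ ∃ i, x ∈ C i)
    (hdisj : ∀ᵐ x, ∀ i j, i ≠ j → ¬ (x ∈ C i ∧ x ∈ C j)) :
    volume T = ∑ i, volume (C i) := by
  have h1 : T =ᵐ[volume] ⋃ i, C i := by
    filter_upwards [hT] with x hx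
    refine propext (hx.trans ?_)
    exact Set.mem_iUnion.symm
  rw [measure_congr h1, measure_iUnion₀, tsum_fintype]
  · intro i j hij
    refine measure_eq_zero_iff_ae_notMem.2 ?_
    filter_upwards [hdisj] with x hx
    exact fun h => hx i j hij h
  · exact fun i => (hC i).nullMeasurableSet

/-- Shifting the window of summation by one changes the sum by at most two terms. -/
lemma abs_sum_shift_one_le {g : ℤ → ℝ} {M : ℝ} (hg : ∀ k, |g k| ≤ M) (n : ℕ) (q : ℤ) :
    |(∑ k ∈ Finset.range n, g (k - (q + 1))) - ∑ k ∈ Finset.range n, g (k - q)| ≤ 2 * M := by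
  have : (∑ k ∈ Finset.range n, g (k - (q + 1))) - ∑ k ∈ Finset.range n, g (k - q)
      = g (-(q + 1)) - g (n - (q + 1)) := by
    induction n with
    | zero => simp
    | succ n ih =>
      rw [Finset.sum_range_succ, Finset.sum_range_succ]
      have e : ((n + 1 : ℕ) : ℤ) - (q + 1) = n - q := by push_cast; ring
      rw [e]
      linarith
  rw [this]
  refine (abs_sub _ _).trans ?_
  linarith [hg (-(q + 1)), hg (n - (q + 1))]

/-- Birkhoff sums of a bounded sequence over two windows `q` steps apart stay within a distance
independent of the length `n`. -/
lemma abs_sum_shift_sub_le {g : ℤ → ℝ} {M : ℝ} (hg : ∀ k, |g k| ≤ M) (n : ℕ) (q : ℤ) :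
    |(∑ k ∈ Finset.range n, g (k - q)) - ∑ k ∈ Finset.range n, g k| ≤ 2 * M * |(q : ℝ)| := by
  induction q using Int.induction_on with
  | zero => simp
  | succ m ih =>
    have h := abs_sum_shift_one_le hg n m
    have e1 : |((m : ℤ) : ℝ)| = m := by simp
    have e2 : |(((m : ℤ) + 1 : ℤ) : ℝ)| = m + 1 := by
      push_cast
      rw [abs_of_nonneg (by positivity)]
    rw [e1] at ih
    rw [e2]
    rw [abs_le] at *
    constructor <;> linarith [h.1, h.2, ih.1, ih.2]
  | pred m ih =>
    have h := abs_sum_shift_one_le hg n (-(m : ℤ) - 1)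
    rw [sub_add_cancel] at h
    have e1 : |((-(m : ℤ) : ℤ) : ℝ)| = m := by simp
    have e2 : |((-(m : ℤ) - 1 : ℤ) : ℝ)| = m + 1 := by
      push_cast
      rw [abs_of_nonpos] <;> linarith [(Nat.cast_nonneg m : (0 : ℝ) ≤ m)]
    rw [e1] at ih
    rw [e2]
    rw [abs_le] at *
    constructor <;> linarith [h.1, h.2, ih.1, ih.2]

end Aux

/-- equidecomposability using translations by vectors in `ℤα + ℤ^d`
preserves the bounded remainder property. -/
theorem stmt17 {d : ℕ} (hd : 1 ≤ d) (α : Fin d → ℝ) (hα : IsIrrationalVector α)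
    (S S' : Set (Fin d → ℝ)) (hSbd : Bornology.IsBounded S) (hSmeas : MeasurableSet S)
    (hS'bd : Bornology.IsBounded S') (hS'meas : MeasurableSet S')
    (heq : EquidecompBy MeasurableSet S S' (lat α)) (hbrs : IsBRS α S) :
    IsBRS α S' := by
  obtain ⟨N, A, γ, hA, hγ, hd1, hS, hd2, hS'⟩ := heq
  choose q p hqp using hγ
  -- The pieces may be unbounded on a null set, hence the intersection with `S`.
  set B : Fin N → Set (Fin d → ℝ) := fun i => A i ∩ S with hBdef
  have hB : ∀ i, MeasurableSet (B i) := fun i => (hA i).inter hSmeas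
  have hBb : ∀ i, Bornology.IsBounded (B i) := fun i => hSbd.subset Set.inter_subset_right
  set D : Fin N → Set (Fin d → ℝ) := fun i => (fun y => y - γ i) ⁻¹' B i with hDdef
  have hD : ∀ i, MeasurableSet (D i) := fun i => (measurable_id.sub_const (γ i)) (hB i)
  have hDb : ∀ i, Bornology.IsBounded (D i) := by
    intro i
    obtain ⟨R, hR⟩ := (hBb i).exists_norm_le
    refine isBounded_iff_forall_norm_le.2 ⟨R + ‖γ i‖, fun y hy => ?_⟩
    have h1 := hR _ hy
    have h2 := norm_add_le (y - γ i) (γ i)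
    rw [sub_add_cancel] at h2
    linarith
  have hS1 : ∀ᵐ x, x ∈ S ↔ ∃ i, x ∈ A i := by
    filter_upwards [measure_symmDiff_eq_zero_iff.1 hS] with x hx
    have hx' : (x ∈ S) = (x ∈ ⋃ i, A i) := hx
    rw [hx', Set.mem_iUnion]
  have himg : ∀ i x, x ∈ (fun x => x + γ i) '' A i ↔ x - γ i ∈ A i := by
    intro i x
    constructor
    · rintro ⟨y, hy, rfl⟩
      simpa using hy
    · exact fun h => ⟨_, h, sub_add_cancel _ _⟩
  have hS'1 : ∀ᵐ x, x ∈ S' ↔ ∃ i, x - γ i ∈ A i := by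
    filter_upwards [measure_symmDiff_eq_zero_iff.1 hS'] with x hx
    have hx' : (x ∈ S') = (x ∈ ⋃ i, (fun x => x + γ i) '' A i) := hx
    rw [hx', Set.mem_iUnion]
    exact exists_congr fun i => himg i x
  have hBS : ∀ᵐ x, x ∈ S ↔ ∃ i, x ∈ B i := by
    filter_upwards [hS1] with x hx
    exact ⟨fun h => (hx.1 h).imp fun i hi => ⟨hi, h⟩, fun ⟨i, hi⟩ => hi.2⟩
  have hshift : ∀ᵐ x, ∀ i, x - γ i ∈ A i → x - γ i ∈ S := by
    refine ae_all_iff.2 fun i => ?_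
    filter_upwards [ae_add_right hS1 (-γ i)] with x hx
    rw [← sub_eq_add_neg] at hx
    exact fun h => hx.2 ⟨i, h⟩
  have hDS : ∀ᵐ x, x ∈ S' ↔ ∃ i, x ∈ D i := by
    filter_upwards [hS'1, hshift] with x hx hs
    rw [hx]
    exact exists_congr fun i => ⟨fun h => ⟨h, hs i h⟩, fun h => h.1⟩
  have hBdisj : ∀ᵐ x, ∀ i j, i ≠ j → ¬ (x ∈ B i ∧ x ∈ B j) := by
    refine ae_all_iff.2 fun i => ae_all_iff.2 fun j => ?_
    by_cases hij : i = j
    · simp [hij]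
    filter_upwards [measure_eq_zero_iff_ae_notMem.1 (hd1 i j hij)] with x hx _ h
    exact hx ⟨h.1.1, h.2.1⟩
  have hDdisj : ∀ᵐ x, ∀ i j, i ≠ j → ¬ (x ∈ D i ∧ x ∈ D j) := by
    refine ae_all_iff.2 fun i => ae_all_iff.2 fun j => ?_
    by_cases hij : i = j
    · simp [hij]
    filter_upwards [measure_eq_zero_iff_ae_notMem.1 (hd2 i j hij)] with x hx _ h
    exact hx ⟨(himg i x).2 h.1.1, (himg j x).2 h.2.1⟩
  have hvol : volume S' = volume S := by
    rw [volume_eq_sum hD hDS hDdisj, volume_eq_sum hB hBS hBdisj]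
    refine Finset.sum_congr rfl fun i _ => ?_
    simp only [hDdef, sub_eq_add_neg]
    exact measure_preimage_add_right volume (-γ i) (B i)
  have hmS := ae_multFn_eq_sum hBb hBS hBdisj
  have hmS' := ae_multFn_eq_sum hDb hDS hDdisj
  have hDmult : ∀ i x, multFn (D i) x = multFn (B i) (x - (q i : ℝ) • α) := by
    intro i x
    rw [← multFn_translate (B i) α (q i) (p i) x]
    simp only [hDdef, hqp i]
  choose M hM using fun i => exists_multFn_bound (hBb i)
  obtain ⟨C, hC⟩ := hbrs
  refine ⟨C + ∑ i, 2 * M i * |(q i : ℝ)|, ?_⟩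
  filter_upwards [hC, ae_all_iff.2 fun k : ℕ => ae_add_right hmS ((k : ℝ) • α),
    ae_all_iff.2 fun k : ℕ => ae_add_right hmS' ((k : ℝ) • α)] with x hx h1 h2 n hn
  have hdiff : disc α S' n x - disc α S n x = ∑ i,
      ((∑ k ∈ Finset.range n, (fun m : ℤ => multFn (B i) (x + (m : ℝ) • α)) (k - q i))
        - ∑ k ∈ Finset.range n, (fun m : ℤ => multFn (B i) (x + (m : ℝ) • α)) k) := by
    unfold disc
    rw [hvol, sub_sub_sub_cancel_right, Finset.sum_sub_distrib, Finset.sum_comm,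
      Finset.sum_comm (s := Finset.univ)]
    congr 1
    · refine Finset.sum_congr rfl fun k _ => ?_
      rw [h2 k]
      refine Finset.sum_congr rfl fun i _ => ?_
      rw [hDmult]
      congr 1
      push_cast
      rw [sub_smul, add_sub_assoc]
    · refine Finset.sum_congr rfl fun k _ => ?_
      rw [h1 k]
      simp
  have hbd : |disc α S' n x - disc α S n x| ≤ ∑ i, 2 * M i * |(q i : ℝ)| := by
    rw [hdiff]
    exact (Finset.abs_sum_le_sum_abs _ _).trans
      (Finset.sum_le_sum fun i _ => abs_sum_shift_sub_le
        (g := fun m : ℤ => multFn (B i) (x + (m : ℝ) • α)) (fun k => hM i _) n (q i))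
  have h0 := hx n hn
  rw [abs_le] at h0 hbd ⊢
  constructor <;> linarith [h0.1, h0.2, hbd.1, hbd.2]
end

section
/- Let α be an irrational vector in ℝ^d and let S = I₁ × I₂ × ⋯ × I_d ⊆ ℝ^d be a product of d bounded intervals of positive length. Then S is a bounded remainder set with respect to α if and only if there exists an index j such that the length of I_j belongs to ℤα_j + ℤ, while for every i ≠ j the length of I_i is an integer. -/
/-!
Write `cnt a b y = ⌊y - a⌋ - ⌊y - b⌋` for the multiplicity function of an interval with end points
`a < b`; almost everywhere the multiplicity function of the box is the product of the functions
`cnt (a i) (b i)` of the single coordinates.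

*Sufficiency* (`isBRS_of_lengths`). An interval of integer length has constant multiplicity
function, so only the factor with length `q α + p` matters, and its discrepancy is a telescoping sum
with at most `2 |q|` bounded terms.

*Necessity.* Integrating the discrepancy against bounded functions of all coordinates but one leaves
an essentially bounded function of the remaining coordinate (`exists_slice_bound`).

* Testing against constants reduces to dimension one. There the upper limit of the discrepancies
  is a transfer function, its exponential is an eigenfunction of the rotation, and the eigenvalue
  yields `b j - a j ∈ ℤ α j + ℤ` for every `j` (`length_mem_of_isBRS`).

* Suppose that two lengths, with indices `i ≠ j`, are not integers. Testing against
  `exp (-2 π i x j)` removes the main term and leaves a function of `x i` whose `m`-th Fourier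
  coefficient is a constant times `c m (ω m ^ n - 1) / (ω m - 1)`, where
  `ω m = exp (2 π i (m α i + α j))` and `c m` is the Fourier coefficient of `cnt (a i) (b i)`.
  By Parseval and averaging over `n`, the numbers `|c m / (ω m - 1)| ^ 2` have bounded partial sums
  (`exists_fourier_bound`, `sum_le_of_forall_sum_pow`). However `|c m|` is of order `1 / m` and, by
  inhomogeneous Diophantine approximation, so is `|ω m - 1|` for infinitely many `m`
  (`exists_inhomogeneous_approx`, `exists_resonant`): a contradiction (`not_two_nonint`).
-/

open MeasureTheory

/-! ### Counting functions of intervals -/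

/-- The multiplicity function of the interval `[a, b)`: for `a ≤ b`, the number of integers `k`
with `y + k ∈ [a, b)`. -/
noncomputable def cnt (a b y : ℝ) : ℝ := ((⌊y - a⌋ - ⌊y - b⌋ : ℤ) : ℝ)

lemma cnt_eq_fract (a b y : ℝ) : cnt a b y = (b - a) + (Int.fract (y - b) - Int.fract (y - a)) := by
  unfold cnt Int.fract
  push_cast
  ring

lemma measurable_cnt (a b : ℝ) : Measurable (cnt a b) := by
  have : cnt a b = fun y => (b - a) + (Int.fract (y - b) - Int.fract (y - a)) :=
    funext fun y => cnt_eq_fract a b y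
  rw [this]
  fun_prop

lemma cnt_add_one (a b y : ℝ) : cnt a b (y + 1) = cnt a b y := by
  rw [cnt_eq_fract, cnt_eq_fract, add_sub_right_comm, add_sub_right_comm y 1 a, Int.fract_add_one,
    Int.fract_add_one]

lemma abs_cnt_le (a b y : ℝ) : |cnt a b y| ≤ |b - a| + 1 := by
  rw [cnt_eq_fract]
  refine (abs_add_le _ _).trans (by
    gcongr
    rw [abs_le]
    constructor <;> linarith [Int.fract_nonneg (y - b), Int.fract_nonneg (y - a),
      Int.fract_lt_one (y - b), Int.fract_lt_one (y - a)])

/-- The product formula holds away from the integer translates of the faces of the box. -/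
lemma multFn_eq_prod {d : ℕ} (a b : Fin d → ℝ) (hab : ∀ i, a i < b i) (I : Fin d → Set ℝ)
    (hI : ∀ i, Set.Ioo (a i) (b i) ⊆ I i ∧ I i ⊆ Set.Icc (a i) (b i)) (x : Fin d → ℝ)
    (hx : ∀ i, ∀ k : ℤ, x i + k ≠ a i ∧ x i + k ≠ b i) :
    multFn (Set.univ.pi I) x = ∏ i, cnt (a i) (b i) (x i) := by
  classical
  set t : Finset (Fin d → ℤ) :=
    Fintype.piFinset fun i => Finset.Ico (-⌊x i - a i⌋) (-⌊x i - b i⌋) with ht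
  have key : ∀ i, ∀ k : ℤ, (x i + k ∈ I i) ↔ k ∈ Finset.Ico (-⌊x i - a i⌋) (-⌊x i - b i⌋) := by
    intro i k
    obtain ⟨h1, h2⟩ := hx i k
    have e1 : -⌊x i - a i⌋ ≤ k ↔ a i < x i + k := by
      rw [neg_le, Int.le_floor]
      push_cast
      constructor
      · intro h
        exact lt_of_le_of_ne (by linarith) h1.symm
      · intro h
        linarith
    have e2 : k < -⌊x i - b i⌋ ↔ x i + k < b i := by
      rw [lt_neg, Int.floor_lt]
      push_cast
      constructor <;> intro h <;> linarith
    rw [Finset.mem_Ico, e1, e2]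
    constructor
    · intro h
      obtain ⟨h3, h4⟩ := (hI i).2 h
      exact ⟨lt_of_le_of_ne h3 h1.symm, lt_of_le_of_ne h4 h2⟩
    · intro h
      exact (hI i).1 h
  have hmem : ∀ k : Fin d → ℤ, (x + fun i => (k i : ℝ)) ∈ Set.univ.pi I ↔ k ∈ t := by
    intro k
    rw [ht, Fintype.mem_piFinset, Set.mem_univ_pi]
    exact forall_congr' fun i => key i (k i)
  unfold multFn
  rw [tsum_eq_sum (s := t)]
  · rw [Finset.sum_congr rfl (g := fun _ => (1 : ℝ))]
    · rw [Finset.sum_const, ht, Fintype.card_piFinset, nsmul_eq_mul, mul_one]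
      push_cast
      refine Finset.prod_congr rfl fun i _ => ?_
      rw [Int.card_Ico, cnt]
      have : ⌊x i - b i⌋ ≤ ⌊x i - a i⌋ := Int.floor_le_floor (by linarith [hab i])
      have h3 : (((-⌊x i - b i⌋ - -⌊x i - a i⌋).toNat : ℤ)) = ⌊x i - a i⌋ - ⌊x i - b i⌋ := by
        omega
      exact_mod_cast congrArg (Int.cast : ℤ → ℝ) h3
    · intro k hk
      rw [Set.indicator_of_mem ((hmem k).2 hk)]
  · intro k hk
    rw [Set.indicator_of_notMem (fun h => hk ((hmem k).1 h))]

lemma volume_box {d : ℕ} (a b : Fin d → ℝ) (hab : ∀ i, a i < b i) (I : Fin d → Set ℝ)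
    (hI : ∀ i, Set.Ioo (a i) (b i) ⊆ I i ∧ I i ⊆ Set.Icc (a i) (b i)) :
    (volume (Set.univ.pi I)).toReal = ∏ i, (b i - a i) := by
  have h : volume (Set.univ.pi I) = ∏ i, ENNReal.ofReal (b i - a i) := by
    refine le_antisymm ?_ ?_
    · rw [← Real.volume_Icc_pi, ← Set.pi_univ_Icc]
      exact measure_mono (Set.pi_mono fun i _ => (hI i).2)
    · rw [← Real.volume_pi_Ioo]
      exact measure_mono (Set.pi_mono fun i _ => (hI i).1)
  rw [h, ENNReal.toReal_prod]
  exact Finset.prod_congr rfl fun i _ => ENNReal.toReal_ofReal (by linarith [hab i])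

lemma disc_ae_eq {d : ℕ} (α a b : Fin d → ℝ) (hab : ∀ i, a i < b i) (I : Fin d → Set ℝ)
    (hI : ∀ i, Set.Ioo (a i) (b i) ⊆ I i ∧ I i ⊆ Set.Icc (a i) (b i)) :
    ∀ᵐ x : Fin d → ℝ, ∀ n : ℕ, disc α (Set.univ.pi I) n x =
      (∑ k ∈ Finset.range n, ∏ i, cnt (a i) (b i) (x i + k * α i)) - n * ∏ i, (b i - a i) := by
  have h : ∀ᵐ x : Fin d → ℝ, ∀ i, ∀ n : ℕ, ∀ k : ℤ,
      x i + n * α i + k ≠ a i ∧ x i + n * α i + k ≠ b i := by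
    rw [ae_all_iff]
    intro i
    have h1 : ∀ᵐ y : ℝ, ∀ n : ℕ, ∀ k : ℤ, y + n * α i + k ≠ a i ∧ y + n * α i + k ≠ b i := by
      rw [ae_all_iff]
      intro n
      rw [ae_all_iff]
      intro k
      have h2 := (Set.toFinite ({a i - n * α i - k, b i - n * α i - k} : Set ℝ)).countable.ae_notMem
        volume
      filter_upwards [h2] with y hy
      simp only [Set.mem_insert_iff, Set.mem_singleton_iff, not_or] at hy
      exact ⟨fun h => hy.1 (by linarith), fun h => hy.2 (by linarith)⟩
    exact (Measure.tendsto_eval_ae_ae (μ := fun _ : Fin d => (volume : Measure ℝ)) (i := i)).eventually h1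
  filter_upwards [h] with x hx n
  unfold disc
  rw [volume_box a b hab I hI]
  congr 1
  refine Finset.sum_congr rfl fun k _ => ?_
  rw [multFn_eq_prod a b hab I hI]
  · simp
  · intro i m
    simpa using hx i k m

/-! ### Sufficiency -/

/-- Sums of `q`-step differences of a bounded sequence telescope to bounded sums. -/
lemma abs_sum_shift_le (q : ℤ) (B : ℝ) : ∃ C : ℝ, ∀ u : ℤ → ℝ, (∀ k, |u k| ≤ B) → ∀ n : ℕ,
    |∑ k ∈ Finset.range n, (u (k + q) - u k)| ≤ C := by
  have step : ∀ u : ℤ → ℝ, (∀ k, |u k| ≤ B) → ∀ (n : ℕ) (q : ℤ),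
      |∑ k ∈ Finset.range n, (u (k + (q + 1)) - u (k + q))| ≤ 2 * B := by
    intro u hu n q
    have := Finset.sum_range_sub (fun k : ℕ => u (k + q)) n
    simp only [Nat.cast_add, Nat.cast_one, Nat.cast_zero] at this
    have e : ∑ k ∈ Finset.range n, (u (k + (q + 1)) - u (k + q)) = u (n + q) - u (0 + q) := by
      rw [← this]
      refine Finset.sum_congr rfl fun k _ => ?_
      rw [add_comm q 1, add_assoc]
    rw [e]
    calc |u (n + q) - u (0 + q)| ≤ |u (n + q)| + |u (0 + q)| := abs_sub _ _
      _ ≤ 2 * B := by linarith [hu (n + q), hu (0 + q)]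
  induction q using Int.induction_on with
  | zero => exact ⟨0, fun u _ n => by simp⟩
  | succ q ih =>
    obtain ⟨C, hC⟩ := ih
    refine ⟨2 * B + C, fun u hu n => ?_⟩
    have e : ∑ k ∈ Finset.range n, (u (k + (q + 1)) - u k) =
        ∑ k ∈ Finset.range n, (u (k + (q + 1)) - u (k + q)) +
          ∑ k ∈ Finset.range n, (u (k + q) - u k) := by
      rw [← Finset.sum_add_distrib]
      exact Finset.sum_congr rfl fun k _ => by ring
    rw [e]
    exact (abs_add_le _ _).trans (add_le_add (step u hu n q) (hC u hu n))
  | pred q ih =>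
    obtain ⟨C, hC⟩ := ih
    refine ⟨C + 2 * B, fun u hu n => ?_⟩
    have e : ∑ k ∈ Finset.range n, (u (k + (-q - 1)) - u k) =
        ∑ k ∈ Finset.range n, (u (k + -q) - u k) -
        ∑ k ∈ Finset.range n, (u (k + ((-q - 1) + 1)) - u (k + (-q - 1))) := by
      rw [← Finset.sum_sub_distrib]
      exact Finset.sum_congr rfl fun k _ => by rw [sub_add_cancel]; ring
    rw [e]
    exact (abs_sub _ _).trans (add_le_add (hC u hu n) (step u hu n _))

lemma cnt_of_int (a b : ℝ) (m : ℤ) (h : b - a = m) (y : ℝ) : cnt a b y = b - a := by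
  have : y - b = y - a - m := by linarith
  rw [cnt_eq_fract, this, Int.fract_sub_intCast, sub_self, add_zero]

lemma isBRS_of_lengths {d : ℕ} (α a b : Fin d → ℝ) (hab : ∀ i, a i < b i) (I : Fin d → Set ℝ)
    (hI : ∀ i, Set.Ioo (a i) (b i) ⊆ I i ∧ I i ⊆ Set.Icc (a i) (b i)) (j : Fin d) (q p : ℤ)
    (hj : b j - a j = q * α j + p) (hi : ∀ i, i ≠ j → ∃ m : ℤ, b i - a i = m) :
    IsBRS α (Set.univ.pi I) := by
  classical
  obtain ⟨C, hC⟩ := abs_sum_shift_le (-q) 1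
  refine ⟨|∏ i ∈ Finset.univ.erase j, (b i - a i)| * C, ?_⟩
  filter_upwards [disc_ae_eq α a b hab I hI] with x hx n _
  set M := ∏ i ∈ Finset.univ.erase j, (b i - a i) with hM
  have h1 : ∀ k : ℕ, ∏ i, cnt (a i) (b i) (x i + k * α i) =
      M * cnt (a j) (b j) (x j + k * α j) := by
    intro k
    rw [← Finset.prod_erase_mul _ _ (Finset.mem_univ j), hM]
    congr 1
    refine Finset.prod_congr rfl fun i h => ?_
    obtain ⟨m, hm⟩ := hi i (Finset.ne_of_mem_erase h)
    exact cnt_of_int _ _ m hm _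
  have h2 : ∏ i, (b i - a i) = M * (b j - a j) :=
    (Finset.prod_erase_mul _ _ (Finset.mem_univ j)).symm
  -- the sequence whose `q`-step differences are the centred counting function
  set u : ℤ → ℝ := fun k => Int.fract (x j + k * α j - a j) with hu
  have h3 : disc α (Set.univ.pi I) n x = M * ∑ k ∈ Finset.range n, (u (k + -q) - u k) := by
    rw [hx n, Finset.sum_congr rfl fun k _ => h1 k, h2, ← Finset.mul_sum]
    have : (n : ℝ) * (M * (b j - a j)) = M * ∑ k ∈ Finset.range n, (b j - a j) := by
      rw [Finset.sum_const, Finset.card_range, nsmul_eq_mul]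
      ring
    rw [this, ← mul_sub, ← Finset.sum_sub_distrib]
    congr 1
    refine Finset.sum_congr rfl fun k _ => ?_
    have e : x j + k * α j - b j = x j + ((k + -q : ℤ) : ℝ) * α j - a j - p := by
      push_cast
      linarith
    rw [cnt_eq_fract, e, Int.fract_sub_intCast]
    simp only [hu, Int.cast_natCast]
    ring
  rw [h3, abs_mul]
  refine mul_le_mul_of_nonneg_left (hC u (fun k => ?_) n) (abs_nonneg _)
  rw [hu, Int.abs_fract]
  exact (Int.fract_lt_one _).le

/-! ### Fourier coefficients of one-periodic functions -/

/-- The character `t ↦ exp (2 π i t)` of the circle group `ℝ / ℤ`. -/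
noncomputable def ex (t : ℝ) : ℂ := Complex.exp (((2 * Real.pi * t : ℝ) : ℂ) * Complex.I)

lemma ex_add (s t : ℝ) : ex (s + t) = ex s * ex t := by
  unfold ex
  rw [← Complex.exp_add]
  congr 1
  push_cast
  ring

lemma norm_ex (t : ℝ) : ‖ex t‖ = 1 := Complex.norm_exp_ofReal_mul_I _

lemma ex_ne_zero (t : ℝ) : ex t ≠ 0 := Complex.exp_ne_zero _

lemma ex_zero : ex 0 = 1 := by simp [ex]

lemma ex_neg_mul (t : ℝ) : ex (-t) * ex t = 1 := by
  rw [← ex_add, neg_add_cancel, ex_zero]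

lemma ex_eq_one_iff (t : ℝ) : ex t = 1 ↔ ∃ m : ℤ, t = m := by
  unfold ex
  rw [Complex.exp_eq_one_iff]
  refine exists_congr fun m => ?_
  have e : (m : ℂ) * (2 * Real.pi * Complex.I) = ((2 * Real.pi * m : ℝ) : ℂ) * Complex.I := by
    push_cast
    ring
  rw [e, mul_left_inj' Complex.I_ne_zero, Complex.ofReal_inj]
  exact mul_right_inj' (by positivity)

lemma ex_int (m : ℤ) : ex m = 1 := (ex_eq_one_iff _).2 ⟨m, rfl⟩

lemma ex_nat_mul (n : ℕ) (t : ℝ) : ex (n * t) = ex t ^ n := by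
  unfold ex
  rw [← Complex.exp_nat_mul]
  congr 1
  push_cast
  ring

lemma norm_ex_sub_one_le (t : ℝ) : ‖ex t - 1‖ ≤ 2 * Real.pi * |t| := by
  have := @Real.norm_exp_I_mul_ofReal_sub_one_le (2 * Real.pi * t)
  rw [mul_comm Complex.I, Real.norm_eq_abs, abs_mul, abs_of_pos (by positivity)] at this
  exact this

lemma continuous_ex : Continuous ex := by
  unfold ex
  fun_prop

/-- Lebesgue measure on the fundamental domain `(0, 1]` of `ℝ / ℤ`. -/
noncomputable abbrev unitMeas : Measure ℝ := volume.restrict (Set.Ioc 0 1)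

instance : IsProbabilityMeasure unitMeas := ⟨by simp [unitMeas]⟩

/-- The `m`-th Fourier coefficient of a one-periodic function. -/
noncomputable def coef (F : ℝ → ℂ) (m : ℤ) : ℂ := ∫ y, F y * ex (-(m * y)) ∂unitMeas

lemma coef_eq_interval (F : ℝ → ℂ) (m : ℤ) :
    coef F m = ∫ y in (0 : ℝ)..1, F y * ex (-(m * y)) := by
  rw [intervalIntegral.integral_of_le zero_le_one]
  rfl

lemma coef_eq_fourierCoeffOn (F : ℝ → ℂ) (m : ℤ) : coef F m = fourierCoeffOn zero_lt_one F m := by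
  rw [fourierCoeffOn_eq_integral, coef_eq_interval]
  simp only [sub_zero, div_one, one_smul]
  refine intervalIntegral.integral_congr fun y _ => ?_
  simp only [fourier_coe_apply, smul_eq_mul, ex]
  rw [mul_comm]
  congr 2
  push_cast
  ring

lemma coef_zero (F : ℝ → ℂ) : coef F 0 = ∫ y, F y ∂unitMeas := by
  simp [coef, ex_zero]

lemma coef_shift (F : ℝ → ℂ) (hF : ∀ y, F (y + 1) = F y) (c : ℝ) (m : ℤ) :
    coef (fun y => F (y + c)) m = ex (m * c) * coef F m := by
  rw [coef_eq_interval, coef_eq_interval]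
  set G : ℝ → ℂ := fun y => F y * ex (-(m * y)) with hG
  have hp : Function.Periodic G 1 := by
    intro y
    have : -((m : ℝ) * (y + 1)) = -(m * y) + ((-m : ℤ) : ℝ) := by
      push_cast
      ring
    simp only [hG]
    rw [hF, this, ex_add, ex_int, mul_one]
  have e : ∀ y, F (y + c) * ex (-(m * y)) = ex (m * c) * G (y + c) := by
    intro y
    have : -((m : ℝ) * y) = m * c + -(m * (y + c)) := by ring
    simp only [hG]
    rw [this, ex_add]
    ring
  simp only [e]
  rw [intervalIntegral.integral_const_mul, intervalIntegral.integral_comp_add_right G c, zero_add,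
    add_comm 1 c, hp.intervalIntegral_add_eq c 0, zero_add]

lemma coef_const (z : ℂ) (m : ℤ) (hm : m ≠ 0) : coef (fun _ => z) m = 0 := by
  have h := coef_shift (fun _ => z) (fun _ => rfl) (1 / (2 * m)) m
  have hm' : (m : ℝ) ≠ 0 := Int.cast_ne_zero.2 hm
  have e : (m : ℝ) * (1 / (2 * m)) = 1 / 2 := by field_simp
  rw [e] at h
  have hne : ex (1 / 2) ≠ 1 := by
    intro h1
    obtain ⟨k, hk⟩ := (ex_eq_one_iff _).1 h1
    have : (1 : ℝ) = ((2 * k : ℤ) : ℝ) := by push_cast; linarith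
    have : (1 : ℤ) = 2 * k := by exact_mod_cast this
    omega
  by_contra hc
  exact hne (mul_right_cancel₀ hc (by rw [one_mul]; exact h.symm))

lemma integrable_of_bdd {F : ℝ → ℂ} (hF : Measurable F) (C : ℝ) (hC : ∀ y, ‖F y‖ ≤ C) :
    Integrable F unitMeas :=
  Integrable.of_bound hF.aestronglyMeasurable C (Filter.Eventually.of_forall hC)

lemma integrable_mul_ex {F : ℝ → ℂ} (hF : Measurable F) (C : ℝ) (hC : ∀ y, ‖F y‖ ≤ C) (c : ℝ) :
    Integrable (fun y => F y * ex (c * y)) unitMeas :=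
  integrable_of_bdd (hF.mul (continuous_ex.measurable.comp (by fun_prop))) C
    fun y => by rw [norm_mul, norm_ex, mul_one]; exact hC y

/-- The sawtooth function `y ↦ {y}`, complex valued. -/
noncomputable def saw (y : ℝ) : ℂ := (Int.fract y : ℝ)

lemma measurable_saw : Measurable saw := Complex.measurable_ofReal.comp measurable_fract

lemma norm_saw_le (y : ℝ) : ‖saw y‖ ≤ 1 := by
  rw [saw, Complex.norm_real, Real.norm_eq_abs, Int.abs_fract]
  exact (Int.fract_lt_one y).le

lemma saw_add_one (y : ℝ) : saw (y + 1) = saw y := by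
  simp [saw]

lemma coef_saw (m : ℤ) (hm : m ≠ 0) : coef saw m = Complex.I / (2 * Real.pi * m) := by
  have h1 := bernoulliFourierCoeff_eq one_ne_zero m
  rw [bernoulliFourierCoeff, ← coef_eq_fourierCoeffOn] at h1
  have h2 : coef saw m = coef (fun y => ((bernoulliFun 1 y : ℝ) : ℂ)) m + coef (fun _ => 1 / 2) m := by
    unfold coef
    rw [← integral_add]
    · have hae : ∀ᵐ y : ℝ ∂unitMeas, y ∈ Set.Ioc (0 : ℝ) 1 := ae_restrict_mem measurableSet_Ioc
      have hae' : ∀ᵐ y : ℝ ∂unitMeas, y ≠ 1 :=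
        ae_restrict_of_ae ((Set.countable_singleton (1 : ℝ)).ae_notMem volume)
      refine integral_congr_ae ?_
      filter_upwards [hae, hae'] with y hy hy'
      have : Int.fract y = y := Int.fract_eq_self.2 ⟨hy.1.le, lt_of_le_of_ne hy.2 hy'⟩
      rw [saw, this, bernoulliFun_one]
      push_cast
      ring
    · refine (Continuous.integrableOn_Icc ?_).mono_set Set.Ioc_subset_Icc_self
      have : (fun y => bernoulliFun 1 y) = fun y => y - 1 / 2 := funext bernoulliFun_one
      simp only [bernoulliFun_one]
      have := continuous_ex
      fun_prop
    · refine (Continuous.integrableOn_Icc ?_).mono_set Set.Ioc_subset_Icc_self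
      have := continuous_ex
      fun_prop
  rw [h2, h1, coef_const _ _ hm]
  have hm' : (m : ℂ) ≠ 0 := Int.cast_ne_zero.2 hm
  have hp : (Real.pi : ℂ) ≠ 0 := Complex.ofReal_ne_zero.2 Real.pi_ne_zero
  have hI := Complex.I_ne_zero
  simp only [Nat.factorial_one, Nat.cast_one, pow_one, add_zero]
  field_simp
  rw [Complex.I_sq]

/-- The counting function as a complex valued function. -/
noncomputable def cntC (a b y : ℝ) : ℂ := (cnt a b y : ℝ)

lemma measurable_cntC (a b : ℝ) : Measurable (cntC a b) :=
  Complex.measurable_ofReal.comp (measurable_cnt a b)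

lemma norm_cntC_le (a b y : ℝ) : ‖cntC a b y‖ ≤ |b - a| + 1 := by
  rw [cntC, Complex.norm_real]
  exact abs_cnt_le a b y

lemma cntC_add_one (a b y : ℝ) : cntC a b (y + 1) = cntC a b y := by
  rw [cntC, cntC, cnt_add_one]

lemma coef_cntC_aux (a b : ℝ) (m : ℤ) :
    coef (cntC a b) m = coef (fun _ => ((b - a : ℝ) : ℂ)) m +
      (ex (-(m * b)) - ex (-(m * a))) * coef saw m := by
  have hs : ∀ c : ℝ, coef (fun y => saw (y + -c)) m = ex (-(m * c)) * coef saw m := by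
    intro c
    rw [coef_shift saw saw_add_one, mul_neg]
  have hi : ∀ c : ℝ, Integrable (fun y => saw (y + -c) * ex (-(m * y))) unitMeas := by
    intro c
    have := integrable_mul_ex (F := fun y => saw (y + -c)) (measurable_saw.comp (by fun_prop)) 1
      (fun y => norm_saw_le _) (-m)
    simpa only [neg_mul] using this
  have hi2 : Integrable (fun y : ℝ => ((b - a : ℝ) : ℂ) * ex (-(m * y))) unitMeas := by
    have := integrable_mul_ex (F := fun _ => ((b - a : ℝ) : ℂ)) measurable_const _
      (fun y => le_rfl) (-m)
    simpa only [neg_mul] using this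
  rw [sub_mul, ← hs, ← hs]
  unfold coef
  rw [← integral_sub (hi b) (hi a)]
  refine Eq.trans ?_ (integral_add hi2 ((hi b).sub (hi a)))
  refine integral_congr_ae (Filter.Eventually.of_forall fun y => ?_)
  simp only [cntC, cnt_eq_fract, saw, ← sub_eq_add_neg]
  push_cast
  ring

lemma coef_cntC (a b : ℝ) (m : ℤ) (hm : m ≠ 0) :
    coef (cntC a b) m = (ex (-(m * b)) - ex (-(m * a))) * (Complex.I / (2 * Real.pi * m)) := by
  rw [coef_cntC_aux, coef_const _ _ hm, coef_saw m hm, zero_add]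

lemma coef_cntC_zero (a b : ℝ) : coef (cntC a b) 0 = ((b - a : ℝ) : ℂ) := by
  rw [coef_cntC_aux, coef_zero]
  simp

lemma norm_coef_cntC (a b : ℝ) (m : ℤ) (hm : m ≠ 0) :
    ‖coef (cntC a b) m‖ = ‖ex (m * (b - a)) - 1‖ / (2 * Real.pi * |(m : ℝ)|) := by
  have e : ex (-(m * b)) - ex (-(m * a)) = -(ex (-(m * b)) * (ex (m * (b - a)) - 1)) := by
    have : -((m : ℝ) * a) = -(m * b) + m * (b - a) := by ring
    rw [this, ex_add]
    ring
  rw [coef_cntC a b m hm, e, norm_mul, norm_neg, norm_mul, norm_ex, norm_div, norm_mul, norm_mul]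
  simp [abs_of_pos Real.pi_pos, div_eq_mul_inv]

/-- Parseval's identity. -/
lemma hasSum_coef {F : ℝ → ℂ} (hF : Measurable F) (C : ℝ) (hC : ∀ᵐ y ∂unitMeas, ‖F y‖ ≤ C) :
    HasSum (fun m => ‖coef F m‖ ^ 2) (∫ y, ‖F y‖ ^ 2 ∂unitMeas) := by
  have hL : MemLp F 2 unitMeas := MemLp.of_bound hF.aestronglyMeasurable C hC
  have h := hasSum_sq_fourierCoeffOn zero_lt_one hL
  simp only [← coef_eq_fourierCoeffOn, sub_zero, inv_one, one_smul] at h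
  rwa [intervalIntegral.integral_of_le zero_le_one] at h

/-! ### Partial integration of the discrepancy -/

/-- A function tested by every bounded function with constant `C` is essentially bounded
by `C`. -/
lemma ae_bound_of_test {W : ℝ → ℂ} (hW : Measurable W) (B : ℝ) (hB : ∀ y, ‖W y‖ ≤ B) (C : ℝ)
    (hC : 0 ≤ C)
    (h : ∀ ψ : ℝ → ℂ, Measurable ψ → (∀ y, ‖ψ y‖ ≤ B) →
      ‖∫ y, W y * ψ y ∂unitMeas‖ ≤ C * ∫ y, ‖ψ y‖ ∂unitMeas) :
    ∀ᵐ y ∂unitMeas, ‖W y‖ ≤ C := by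
  have hB0 : 0 ≤ B := (norm_nonneg _).trans (hB 0)
  set A : Set ℝ := {y | C < ‖W y‖} with hA
  have hAm : MeasurableSet A := measurableSet_lt measurable_const hW.norm
  -- test against the conjugate of `W`, restricted to the set where the bound fails
  set ψ : ℝ → ℂ := A.indicator fun y => star (W y) with hψ
  have hψm : Measurable ψ := (continuous_star.measurable.comp hW).indicator hAm
  have hψn : ∀ y, ‖ψ y‖ = A.indicator (fun y => ‖W y‖) y := by
    intro y
    rw [hψ, norm_indicator_eq_indicator_norm]
    simp only [norm_star]
  have hψB : ∀ y, ‖ψ y‖ ≤ B := by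
    intro y
    rw [hψn]
    by_cases hy : y ∈ A
    · rw [Set.indicator_of_mem hy]
      exact hB y
    · rw [Set.indicator_of_notMem hy]
      exact hB0
  have h1 := h ψ hψm hψB
  have h2 : ∀ y, W y * ψ y = ((‖W y‖ * ‖ψ y‖ : ℝ) : ℂ) := by
    intro y
    rw [hψn, hψ]
    by_cases hy : y ∈ A
    · rw [Set.indicator_of_mem hy, Set.indicator_of_mem hy]
      have := Complex.mul_conj' (W y)
      push_cast
      rw [← pow_two]
      exact this
    · rw [Set.indicator_of_notMem hy, Set.indicator_of_notMem hy]
      simp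
  have hint1 : Integrable (fun y => ‖ψ y‖) unitMeas := (integrable_of_bdd hψm B hψB).norm
  have hint2 : Integrable (fun y => ‖W y‖ * ‖ψ y‖) unitMeas := by
    have := (integrable_of_bdd (hW.mul hψm) (B * B) (fun y => by
      rw [Pi.mul_apply, norm_mul]
      exact mul_le_mul (hB y) (hψB y) (norm_nonneg _) hB0)).norm
    simpa only [Pi.mul_apply, norm_mul] using this
  simp only [h2] at h1
  rw [integral_complex_ofReal, Complex.norm_real, Real.norm_eq_abs] at h1
  have h3 := (le_abs_self _).trans h1
  rw [← integral_const_mul] at h3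
  have hnn : ∀ y, 0 ≤ (‖W y‖ * ‖ψ y‖ - C * ‖ψ y‖) := by
    intro y
    rw [← sub_mul]
    by_cases hy : y ∈ A
    · exact mul_nonneg (sub_nonneg.2 (le_of_lt hy)) (norm_nonneg _)
    · rw [hψn, Set.indicator_of_notMem hy, mul_zero]
  have h4 : ∫ y, (‖W y‖ * ‖ψ y‖ - C * ‖ψ y‖) ∂unitMeas = 0 := by
    refine le_antisymm ?_ (integral_nonneg hnn)
    rw [integral_sub hint2 (hint1.const_mul C)]
    linarith
  have h5 := (integral_eq_zero_iff_of_nonneg hnn (hint2.sub (hint1.const_mul C))).1 h4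
  filter_upwards [h5] with y hy
  by_contra hc
  have hyA : y ∈ A := not_le.1 hc
  have hpos : 0 < ‖W y‖ := hC.trans_lt hyA
  simp only [Pi.zero_apply] at hy
  rw [← sub_mul, hψn, Set.indicator_of_mem hyA] at hy
  have := mul_pos (sub_pos.2 hyA) hpos
  linarith

/-- Integrating the discrepancy against bounded functions of all variables except `x j` gives an
essentially bounded function of `x j`, uniformly in the time `n`. -/
lemma exists_slice_bound {d : ℕ} (α a b : Fin d → ℝ) (hab : ∀ i, a i < b i) (I : Fin d → Set ℝ)
    (hI : ∀ i, Set.Ioo (a i) (b i) ⊆ I i ∧ I i ⊆ Set.Icc (a i) (b i))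
    (h : IsBRS α (Set.univ.pi I)) : ∃ C : ℝ, 0 ≤ C ∧ ∀ n : ℕ, 1 ≤ n → ∀ j : Fin d,
      ∀ φ : Fin d → ℝ → ℂ, (∀ i, Measurable (φ i)) → (∀ i y, ‖φ i y‖ ≤ 1) →
      ∀ᵐ y ∂unitMeas, ‖(∑ k ∈ Finset.range n, cntC (a j) (b j) (y + k * α j) *
          ∏ i ∈ Finset.univ.erase j, ∫ y, cntC (a i) (b i) (y + k * α i) * φ i y ∂unitMeas) -
        n * (∏ i, ((b i - a i : ℝ) : ℂ)) *
          ∏ i ∈ Finset.univ.erase j, ∫ y, φ i y ∂unitMeas‖ ≤ C := by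
  classical
  obtain ⟨C, hC⟩ := h
  refine ⟨|C|, abs_nonneg C, fun n hn j φ hφ hφ1 => ?_⟩
  set P : ℕ → ℂ := fun k =>
    ∏ i ∈ Finset.univ.erase j, ∫ y, cntC (a i) (b i) (y + k * α i) * φ i y ∂unitMeas with hP
  set Q : ℂ := n * (∏ i, ((b i - a i : ℝ) : ℂ)) *
    ∏ i ∈ Finset.univ.erase j, ∫ y, φ i y ∂unitMeas with hQ
  have hcm : ∀ i (c : ℝ), Measurable fun y => cntC (a i) (b i) (y + c) :=
    fun i c => (measurable_cntC _ _).comp (by fun_prop)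
  have hWm : Measurable fun y =>
      (∑ k ∈ Finset.range n, cntC (a j) (b j) (y + k * α j) * P k) - Q :=
    (Finset.measurable_fun_sum _ fun k _ => (hcm j _).mul_const _).sub_const _
  refine ae_bound_of_test hWm ((∑ k ∈ Finset.range n, (|b j - a j| + 1) * ‖P k‖) + ‖Q‖) ?_ |C|
    (abs_nonneg C) ?_
  · intro y
    refine (norm_sub_le _ _).trans (add_le_add ((norm_sum_le _ _).trans ?_) le_rfl)
    refine Finset.sum_le_sum fun k _ => ?_
    rw [norm_mul]
    exact mul_le_mul_of_nonneg_right (norm_cntC_le _ _ _) (norm_nonneg _)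
  intro ψ hψ hψB
  generalize ((∑ k ∈ Finset.range n, (|b j - a j| + 1) * ‖P k‖) + ‖Q‖) = B at hψB
  -- insert the test function in the `j`-th slot
  set Φ : Fin d → ℝ → ℂ := Function.update φ j ψ with hΦ
  have hΦj : Φ j = ψ := Function.update_self ..
  have hΦi : ∀ i ∈ Finset.univ.erase j, Φ i = φ i := fun i hi =>
    Function.update_of_ne (Finset.ne_of_mem_erase hi) ..
  have hΦm : ∀ i, Measurable (Φ i) := by
    intro i
    by_cases hij : i = j
    · rw [hij, hΦj]; exact hψ
    · rw [hΦi i (Finset.mem_erase.2 ⟨hij, Finset.mem_univ _⟩)]; exact hφ i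
  have hΦB : ∀ i y, ‖Φ i y‖ ≤ max B 1 := by
    intro i y
    by_cases hij : i = j
    · rw [hij, hΦj]; exact (hψB y).trans (le_max_left _ _)
    · rw [hΦi i (Finset.mem_erase.2 ⟨hij, Finset.mem_univ _⟩)]
      exact (hφ1 i y).trans (le_max_right _ _)
  have hint : ∀ i (c : ℝ), Integrable (fun y => cntC (a i) (b i) (y + c) * Φ i y) unitMeas := by
    intro i c
    refine integrable_of_bdd ((hcm i c).mul (hΦm i)) ((|b i - a i| + 1) * max B 1) fun y => ?_
    rw [norm_mul]
    exact mul_le_mul (norm_cntC_le _ _ _) (hΦB i y) (norm_nonneg _) (by positivity)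
  have hint0 : ∀ i, Integrable (Φ i) unitMeas := fun i => integrable_of_bdd (hΦm i) _ (hΦB i)
  set μ : Measure (Fin d → ℝ) := Measure.pi fun _ => unitMeas with hμ
  have hμr : μ = volume.restrict (Set.univ.pi fun _ => Set.Ioc 0 1) :=
    (Measure.restrict_pi_pi (fun _ : Fin d => (volume : Measure ℝ)) fun _ => Set.Ioc 0 1).symm
  -- the two evaluations of the integral of the discrepancy against the product test function
  set D : (Fin d → ℝ) → ℂ := fun x =>
    (∑ k ∈ Finset.range n, ∏ i, (cntC (a i) (b i) (x i + k * α i) * Φ i (x i))) -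
      (n * ∏ i, ((b i - a i : ℝ) : ℂ)) * ∏ i, Φ i (x i) with hD
  have hDint : ∫ x, D x ∂μ =
      ∫ y, ((∑ k ∈ Finset.range n, cntC (a j) (b j) (y + k * α j) * P k) - Q) * ψ y ∂unitMeas := by
    have hs : ∀ k : ℕ, Integrable (fun x : Fin d → ℝ =>
        ∏ i, (cntC (a i) (b i) (x i + k * α i) * Φ i (x i))) μ := fun k =>
      Integrable.fintype_prod (f := fun i y => cntC (a i) (b i) (y + k * α i) * Φ i y)
        fun i => hint i _
    have hs0 : Integrable (fun x : Fin d → ℝ => ∏ i, Φ i (x i)) μ :=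
      Integrable.fintype_prod (f := Φ) hint0
    rw [hD, integral_sub (integrable_finsetSum _ fun k _ => hs k) (hs0.const_mul _),
      integral_finsetSum _ fun k _ => hs k, integral_const_mul,
      integral_fintype_prod_eq_prod (f := Φ)]
    have e1 : ∀ k : ℕ, ∫ x : Fin d → ℝ, ∏ i, (cntC (a i) (b i) (x i + k * α i) * Φ i (x i)) ∂μ =
        ∫ y, cntC (a j) (b j) (y + k * α j) * P k * ψ y ∂unitMeas := by
      intro k
      rw [integral_fintype_prod_eq_prod (f := fun i y => cntC (a i) (b i) (y + k * α i) * Φ i y),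
        ← Finset.mul_prod_erase _ _ (Finset.mem_univ j), hΦj]
      rw [Finset.prod_congr rfl fun i hi => by rw [hΦi i hi], ← integral_mul_const]
      exact integral_congr_ae (Filter.Eventually.of_forall fun y => by simp only [hP]; ring)
    have e2 : n * (∏ i, ((b i - a i : ℝ) : ℂ)) * ∏ i, ∫ y, Φ i y ∂unitMeas =
        ∫ y, Q * ψ y ∂unitMeas := by
      have e3 : ∏ i ∈ Finset.univ.erase j, ∫ y, Φ i y ∂unitMeas =
          ∏ i ∈ Finset.univ.erase j, ∫ y, φ i y ∂unitMeas :=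
        Finset.prod_congr rfl fun i hi => by rw [hΦi i hi]
      rw [← Finset.mul_prod_erase _ (fun i => ∫ y, Φ i y ∂unitMeas) (Finset.mem_univ j), hΦj,
        integral_const_mul, e3, hQ]
      ring
    have hi1 : ∀ k : ℕ, Integrable (fun y => cntC (a j) (b j) (y + k * α j) * P k * ψ y)
        unitMeas := by
      intro k
      have := (hint j (k * α j)).mul_const (P k)
      rw [hΦj] at this
      refine this.congr (Filter.Eventually.of_forall fun y => by simp only; ring)
    have hi2 : Integrable (fun y => Q * ψ y) unitMeas := by
      have := (hint0 j).const_mul Q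
      rwa [hΦj] at this
    rw [Finset.sum_congr rfl fun k _ => e1 k, e2, ← integral_finsetSum _ fun k _ => hi1 k,
      ← integral_sub (integrable_finsetSum _ fun k _ => hi1 k) hi2]
    exact integral_congr_ae (Filter.Eventually.of_forall fun y => by
      simp only [sub_mul, Finset.sum_mul])
  have hDle : ‖∫ x, D x ∂μ‖ ≤ ∫ x : Fin d → ℝ, |C| * ∏ i, ‖Φ i (x i)‖ ∂μ := by
    refine norm_integral_le_of_norm_le ?_ ?_
    · exact (Integrable.fintype_prod (f := fun i y => ‖Φ i y‖) fun i => (hint0 i).norm).const_mul _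
    · rw [hμr]
      refine ae_restrict_of_ae ?_
      filter_upwards [hC, disc_ae_eq α a b hab I hI] with x hx1 hx2
      have e : D x = ((disc α (Set.univ.pi I) n x : ℝ) : ℂ) * ∏ i, Φ i (x i) := by
        rw [hx2 n, hD]
        simp only [cntC, Finset.prod_mul_distrib]
        push_cast
        rw [sub_mul, Finset.sum_mul]
      rw [e, norm_mul, Complex.norm_real, norm_prod]
      exact mul_le_mul_of_nonneg_right ((hx1 n hn).trans (le_abs_self C))
        (Finset.prod_nonneg fun i _ => norm_nonneg _)
  rw [hDint, integral_const_mul, integral_fintype_prod_eq_prod (f := fun i y => ‖Φ i y‖),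
    ← Finset.mul_prod_erase _ _ (Finset.mem_univ j), hΦj] at hDle
  refine hDle.trans (mul_le_mul_of_nonneg_left ?_ (abs_nonneg C))
  refine mul_le_of_le_one_right (integral_nonneg fun y => norm_nonneg _) ?_
  refine Finset.prod_le_one (fun i _ => integral_nonneg fun y => norm_nonneg _) fun i hi => ?_
  rw [hΦi i hi]
  calc ∫ y, ‖φ i y‖ ∂unitMeas ≤ ∫ _, (1 : ℝ) ∂unitMeas :=
        integral_mono (integrable_of_bdd (hφ i) 1 (hφ1 i)).norm (integrable_const _) (hφ1 i)
    _ = 1 := by simp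

/-! ### The one-dimensional case -/

/-- Kesten's theorem: bounded discrepancies force the length of the interval into `ℤ α + ℤ`.
The upper limit `h` of the discrepancies satisfies `h y = cnt y - (b - a) + h (y + α)`, and since
`cnt` is integer valued, `exp (2 π i h)` is an eigenfunction of the rotation by `α` with
eigenvalue `exp (2 π i (b - a))`. -/
lemma length_mem_of_bounded (α a b C : ℝ)
    (hC : ∀ n : ℕ, 1 ≤ n → ∀ᵐ y ∂unitMeas,
      |(∑ k ∈ Finset.range n, cnt a b (y + k * α)) - n * (b - a)| ≤ C) :
    ∃ q p : ℤ, b - a = q * α + p := by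
  set D : ℕ → ℝ → ℝ := fun n y => (∑ k ∈ Finset.range n, cnt a b (y + k * α)) - n * (b - a)
    with hD
  have hDm : ∀ n, Measurable (D n) := fun n =>
    (Finset.measurable_fun_sum _ fun k _ => (measurable_cnt a b).comp (by fun_prop)).sub_const _
  have hDs : ∀ n y, D (n + 1) y = (cnt a b y - (b - a)) + D n (y + α) := by
    intro n y
    simp only [hD]
    rw [Finset.sum_range_succ']
    have : ∀ k : ℕ, y + ((k + 1 : ℕ) : ℝ) * α = y + α + k * α := by
      intro k
      push_cast
      ring
    simp only [this]
    push_cast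
    simp only [zero_mul, add_zero]
    ring
  set h : ℝ → ℝ := fun y => Filter.limsup (fun n => D n y) Filter.atTop with hh
  have hhm : Measurable h := Measurable.limsup hDm
  have hh1 : ∀ y, h (y + 1) = h y := by
    intro y
    have : ∀ n, D n (y + 1) = D n y := by
      intro n
      simp only [hD]
      congr 1
      refine Finset.sum_congr rfl fun k _ => ?_
      rw [add_right_comm, cnt_add_one]
    simp only [hh, this]
  have hbd : ∀ᵐ y ∂unitMeas, ∀ n : ℕ, 1 ≤ n → |D n y| ≤ C := by
    rw [ae_all_iff]
    intro n
    by_cases hn : 1 ≤ n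
    · filter_upwards [hC n hn] with y hy _ using hy
    · exact Filter.Eventually.of_forall fun y h' => absurd h' hn
  have hcoc : ∀ᵐ y ∂unitMeas, h y = (cnt a b y - (b - a)) + h (y + α) := by
    filter_upwards [hbd] with y hy
    have hb : ∀ n, |D n (y + α)| ≤ C + |cnt a b y - (b - a)| := by
      intro n
      have : D n (y + α) = D (n + 1) y - (cnt a b y - (b - a)) := by rw [hDs]; ring
      rw [this]
      exact (abs_sub _ _).trans (add_le_add (hy (n + 1) (by omega)) le_rfl)
    have hle : Filter.IsBoundedUnder (· ≤ ·) Filter.atTop fun n => D n (y + α) :=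
      Filter.isBoundedUnder_of ⟨_, fun n => (abs_le.1 (hb n)).2⟩
    have hge : Filter.IsBoundedUnder (· ≥ ·) Filter.atTop fun n => D n (y + α) :=
      Filter.isBoundedUnder_of ⟨_, fun n => (abs_le.1 (hb n)).1⟩
    simp only [hh]
    rw [← Filter.limsup_nat_add (fun n => D n y) 1]
    simp only [hDs]
    exact limsup_const_add _ _ _ hle hge.isCoboundedUnder_le
  set F : ℝ → ℂ := fun y => ex (h y) with hF
  have hFm : Measurable F := continuous_ex.measurable.comp hhm
  have hF1 : ∀ y, F (y + 1) = F y := fun y => by simp only [hF, hh1]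
  have hFn : ∀ y, ‖F y‖ = 1 := fun y => norm_ex _
  have heig : ∀ m, coef F m = ex (-(b - a)) * (ex (m * α) * coef F m) := by
    intro m
    rw [← coef_shift F hF1]
    unfold coef
    rw [← integral_const_mul]
    refine integral_congr_ae ?_
    filter_upwards [hcoc] with y hy
    have e : F y = ex (-(b - a)) * F (y + α) := by
      simp only [hF]
      rw [hy, ex_add, sub_eq_add_neg, ex_add, cnt, ex_int, one_mul]
    rw [e, mul_assoc]
  have hsum := hasSum_coef hFm 1 (Filter.Eventually.of_forall fun y => (hFn y).le)
  simp only [hFn] at hsum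
  obtain ⟨m, hm⟩ : ∃ m, coef F m ≠ 0 := by
    by_contra hc
    push Not at hc
    simp only [hc] at hsum
    have h0 : HasSum (fun _ : ℤ => ‖(0 : ℂ)‖ ^ 2) 0 := by
      convert (hasSum_zero : HasSum (fun _ : ℤ => (0 : ℝ)) 0) using 2
      simp
    have := hsum.unique h0
    simp at this
  have h1 := heig m
  rw [← mul_assoc, ← ex_add] at h1
  have h2 : ex (-(b - a) + m * α) = 1 :=
    mul_right_cancel₀ hm (by rw [one_mul]; exact h1.symm)
  obtain ⟨p, hp⟩ := (ex_eq_one_iff _).1 h2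
  exact ⟨m, -p, by push_cast; linarith⟩

lemma integral_cntC_mul_one (a b c : ℝ) :
    ∫ y, cntC a b (y + c) * 1 ∂unitMeas = ((b - a : ℝ) : ℂ) := by
  have := coef_shift (cntC a b) (cntC_add_one a b) c 0
  rw [coef_cntC_zero, coef_zero, Int.cast_zero, zero_mul, ex_zero, one_mul] at this
  simpa using this

lemma length_mem_of_isBRS {d : ℕ} (α a b : Fin d → ℝ) (hab : ∀ i, a i < b i) (I : Fin d → Set ℝ)
    (hI : ∀ i, Set.Ioo (a i) (b i) ⊆ I i ∧ I i ⊆ Set.Icc (a i) (b i))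
    (h : IsBRS α (Set.univ.pi I)) (j : Fin d) : ∃ q p : ℤ, b j - a j = q * α j + p := by
  classical
  obtain ⟨C, hC0, hC⟩ := exists_slice_bound α a b hab I hI h
  set M : ℝ := ∏ i ∈ Finset.univ.erase j, (b i - a i) with hM
  have hMpos : 0 < M := Finset.prod_pos fun i _ => sub_pos.2 (hab i)
  refine length_mem_of_bounded (α j) (a j) (b j) (C / M) fun n hn => ?_
  filter_upwards [hC n hn j (fun _ _ => 1) (fun _ => measurable_const) (fun _ _ => by simp)]
    with y hy
  simp only [integral_cntC_mul_one] at hy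
  rw [le_div_iff₀ hMpos]
  have e : (∑ k ∈ Finset.range n, cntC (a j) (b j) (y + k * α j) *
      ∏ i ∈ Finset.univ.erase j, ((b i - a i : ℝ) : ℂ)) -
        n * (∏ i, ((b i - a i : ℝ) : ℂ)) * ∏ i ∈ Finset.univ.erase j, ∫ _, (1 : ℂ) ∂unitMeas =
      (((((∑ k ∈ Finset.range n, cnt (a j) (b j) (y + k * α j)) - n * (b j - a j)) * M : ℝ)) : ℂ)
      := by
    rw [← Finset.mul_prod_erase _ _ (Finset.mem_univ j), ← Finset.sum_mul, hM]
    simp only [cntC, integral_const, probReal_univ, one_smul, Finset.prod_const_one, mul_one]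
    push_cast
    ring
  rw [e, Complex.norm_real, Real.norm_eq_abs, abs_mul, abs_of_pos hMpos] at hy
  exact hy

/-! ### Two lengths that are not integers -/

/-- An inhomogeneous Diophantine approximation: if `r / D` is a good approximation of `α`, then
some `m ∈ [D, 2 D)` makes `m r / D + γ` close to an integer. -/
lemma exists_inhomogeneous_approx (α γ : ℝ) (hα : Irrational α) (M : ℕ) :
    ∃ m p : ℤ, (M : ℤ) < m ∧ m * |m * α + γ - p| ≤ 6 := by
  obtain ⟨ε, hε, hε0⟩ := ((hα.eventually_forall_le_dist_cast_rat_of_den_le M).filter_mono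
    nhdsWithin_le_nhds |>.and (self_mem_nhdsWithin : Set.Ioi (0 : ℝ) ∈ nhdsWithin 0 _)).exists
  obtain ⟨n, hn⟩ := exists_nat_one_div_lt hε0
  obtain ⟨r, hr, hrn⟩ := Real.exists_rat_abs_sub_le_and_den_le α (Nat.succ_pos n)
  have hD0 : (0 : ℝ) < r.den := Nat.cast_pos.2 r.pos
  have hD1 : (1 : ℝ) ≤ r.den := by exact_mod_cast r.pos
  have hrn' : (r.den : ℝ) ≤ n + 1 := by exact_mod_cast hrn
  push_cast at hr
  have hDM : M < r.den := by
    by_contra hc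
    have h1 := hε r (not_lt.1 hc)
    rw [Real.dist_eq] at h1
    have h2 : 1 / (((n : ℝ) + 1 + 1) * r.den) ≤ 1 / ((n : ℝ) + 1) :=
      one_div_le_one_div_of_le (by positivity) (by nlinarith)
    linarith
  have hr2 : |α - r| ≤ 1 / ((r.den : ℝ) * r.den) :=
    hr.trans (one_div_le_one_div_of_le (by positivity) (by nlinarith))
  set c : ℤ := round (r.den * γ) with hc
  obtain ⟨u, v, huv⟩ : IsCoprime r.num (r.den : ℤ) := Int.isCoprime_iff_gcd_eq_one.2 (by
    simpa [Int.gcd] using r.reduced)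
  have hDz : (0 : ℤ) < r.den := by exact_mod_cast r.pos
  set s : ℤ := (-c * u) / r.den with hs
  set m : ℤ := r.den + (-c * u) % r.den with hm
  have hm1 : (r.den : ℤ) ≤ m := by
    have := Int.emod_nonneg (-c * u) hDz.ne'
    omega
  have hm2 : m < 2 * r.den := by
    have := Int.emod_lt_of_pos (-c * u) hDz
    omega
  have hm3 : m = r.den + (-c * u - r.den * s) := by
    rw [hm, Int.emod_def]
  have hp : (r.num - s * r.num + c * v) * (r.den : ℤ) = m * r.num + c := by
    rw [hm3]
    linear_combination c * huv
  refine ⟨m, r.num - s * r.num + c * v, by omega, ?_⟩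
  set p : ℤ := r.num - s * r.num + c * v with hpdef
  have hpR : (p : ℝ) * r.den = m * r.num + c := by exact_mod_cast hp
  have hrR : (r : ℝ) * r.den = r.num := by exact_mod_cast Rat.mul_den_eq_num r
  have hm1R : (r.den : ℝ) ≤ m := by exact_mod_cast hm1
  have hm2R : (m : ℝ) ≤ 2 * r.den := by exact_mod_cast hm2.le
  have hm0 : (0 : ℝ) ≤ m := hD0.le.trans hm1R
  have hround : |r.den * γ - c| ≤ 1 / 2 := abs_sub_round _
  have hkey : r.den * (m * α + γ - p) = r.den * m * (α - r) + (r.den * γ - c) := by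
    linear_combination (-1 : ℝ) * hpR + (m : ℝ) * hrR
  have h1 : r.den * |m * α + γ - p| ≤ 3 := by
    have e : r.den * |m * α + γ - p| = |r.den * (m * α + γ - p)| := by
      rw [abs_mul, abs_of_pos hD0]
    rw [e, hkey]
    refine (abs_add_le _ _).trans ?_
    rw [abs_mul, abs_of_nonneg (mul_nonneg hD0.le hm0)]
    have h2 : r.den * m * |α - r| ≤ r.den * (2 * r.den) * (1 / ((r.den : ℝ) * r.den)) := by
      gcongr
    have h3 : (r.den : ℝ) * (2 * r.den) * (1 / ((r.den : ℝ) * r.den)) = 2 := by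
      field_simp
    linarith
  calc (m : ℝ) * |m * α + γ - p| ≤ 2 * r.den * |m * α + γ - p| := by gcongr
    _ ≤ 6 := by linarith

/-- Averaging over `n` removes the factors `‖ω m ^ n - 1‖ ^ 2`, whose mean value is `2`. -/
lemma sum_le_of_forall_sum_pow (K : Finset ℤ) (A : ℤ → ℝ) (ω : ℤ → ℂ) (hA : ∀ m, 0 ≤ A m)
    (hω : ∀ m, ‖ω m‖ = 1) (hω1 : ∀ m ∈ K, ω m ≠ 1) (B : ℝ)
    (h : ∀ n : ℕ, 1 ≤ n → ∑ m ∈ K, A m * ‖ω m ^ n - 1‖ ^ 2 ≤ B) : 2 * ∑ m ∈ K, A m ≤ B := by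
  have hlow : ∀ m ∈ K, ∀ N : ℕ,
      2 * (N : ℝ) - 4 / ‖ω m - 1‖ ≤ ∑ n ∈ Finset.range N, ‖ω m ^ (n + 1) - 1‖ ^ 2 := by
    intro m hm N
    have hpos : 0 < ‖ω m - 1‖ := norm_pos_iff.2 (sub_ne_zero.2 (hω1 m hm))
    have e : ∀ n : ℕ, ‖ω m ^ (n + 1) - 1‖ ^ 2 = 2 - 2 * (ω m * ω m ^ n).re := by
      intro n
      have h1 : ‖ω m ^ (n + 1)‖ ^ 2 = 1 := by rw [norm_pow, hω, one_pow, one_pow]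
      rw [← Complex.normSq_eq_norm_sq, Complex.normSq_apply] at h1 ⊢
      rw [← pow_succ']
      simp only [Complex.sub_re, Complex.sub_im, Complex.one_re, Complex.one_im]
      linear_combination h1
    simp only [e]
    rw [Finset.sum_sub_distrib, ← Finset.mul_sum, ← Complex.re_sum, ← Finset.mul_sum]
    have hg : ‖ω m * ∑ n ∈ Finset.range N, ω m ^ n‖ ≤ 2 / ‖ω m - 1‖ := by
      rw [norm_mul, hω, one_mul, le_div_iff₀ hpos, ← norm_mul, geom_sum_mul]
      refine (norm_sub_le _ _).trans ?_
      rw [norm_pow, hω, one_pow, norm_one]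
      norm_num
    have h2 := (Complex.re_le_norm _).trans hg
    have h3 : 4 / ‖ω m - 1‖ = 2 * (2 / ‖ω m - 1‖) := by ring
    rw [Finset.sum_const, Finset.card_range, nsmul_eq_mul, h3]
    linarith
  set E : ℝ := ∑ m ∈ K, A m * (4 / ‖ω m - 1‖) with hE
  have hN : ∀ N : ℕ, N * (2 * (∑ m ∈ K, A m) - B) ≤ E := by
    intro N
    have h1 : ∑ n ∈ Finset.range N, ∑ m ∈ K, A m * ‖ω m ^ (n + 1) - 1‖ ^ 2 ≤ N * B := by
      refine (Finset.sum_le_sum fun n _ => h (n + 1) (by omega)).trans ?_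
      rw [Finset.sum_const, Finset.card_range, nsmul_eq_mul]
    have h2 : ∑ m ∈ K, A m * (2 * (N : ℝ) - 4 / ‖ω m - 1‖) ≤
        ∑ n ∈ Finset.range N, ∑ m ∈ K, A m * ‖ω m ^ (n + 1) - 1‖ ^ 2 := by
      rw [Finset.sum_comm]
      refine Finset.sum_le_sum fun m hm => ?_
      rw [← Finset.mul_sum]
      exact mul_le_mul_of_nonneg_left (hlow m hm N) (hA m)
    simp only [mul_sub, Finset.sum_sub_distrib] at h2
    rw [← Finset.sum_mul] at h2
    rw [hE]
    nlinarith [h1, h2]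
  by_contra hc
  obtain ⟨N, hN'⟩ := exists_nat_gt (E / (2 * (∑ m ∈ K, A m) - B))
  rw [div_lt_iff₀ (by linarith)] at hN'
  linarith [hN N]


lemma IsIrrationalVector.eq_zero_of_two {d : ℕ} {α : Fin d → ℝ} (hα : IsIrrationalVector α)
    {i j : Fin d} (hij : i ≠ j) (m s p : ℤ) (h : m * α i + s * α j = p) : m = 0 ∧ s = 0 := by
  have e : ((-p : ℤ) : ℝ) + ∑ l, ((Pi.single i m + Pi.single j s : Fin d → ℤ) l : ℝ) * α l = 0 := by
    have h1 : ∀ (i : Fin d) (m : ℤ),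
        ∑ l, ((Pi.single i m : Fin d → ℤ) l : ℝ) * α l = m * α i := by
      intro i m
      rw [Finset.sum_eq_single i]
      · rw [Pi.single_eq_same]
      · intro l _ hl
        rw [Pi.single_eq_of_ne hl, Int.cast_zero, zero_mul]
      · intro hi
        exact absurd (Finset.mem_univ i) hi
    simp only [Pi.add_apply, Int.cast_add, add_mul, Finset.sum_add_distrib, h1]
    push_cast
    linarith
  have h2 := (hα _ _ e).2
  have hi := congrFun h2 i
  have hj := congrFun h2 j
  simp only [Pi.add_apply, Pi.single_eq_same, Pi.zero_apply, Pi.single_eq_of_ne hij,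
    Pi.single_eq_of_ne hij.symm, add_zero, zero_add] at hi hj
  exact ⟨hi, hj⟩

/-- Integrating the discrepancy against `exp (-2 π i x j)` and taking Fourier coefficients in the
variable `x i` bounds the geometric sums of `ω = exp (2 π i (m α i + α j))` weighted by the Fourier
coefficients of the two counting functions. -/
lemma exists_fourier_bound {d : ℕ} (α a b : Fin d → ℝ) (hab : ∀ i, a i < b i) (I : Fin d → Set ℝ)
    (hI : ∀ i, Set.Ioo (a i) (b i) ⊆ I i ∧ I i ⊆ Set.Icc (a i) (b i))
    (h : IsBRS α (Set.univ.pi I)) (i j : Fin d) (hij : i ≠ j) :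
    ∃ C R : ℝ, 0 < R ∧ ∀ n : ℕ, 1 ≤ n → ∀ K : Finset ℤ,
      ∑ m ∈ K, (R * ‖coef (cntC (a j) (b j)) 1‖ * ‖coef (cntC (a i) (b i)) m‖ *
        ‖∑ k ∈ Finset.range n, ex (m * α i + α j) ^ k‖) ^ 2 ≤ C := by
  classical
  obtain ⟨C, hC0, hC⟩ := exists_slice_bound α a b hab I hI h
  have hji : j ∈ Finset.univ.erase i := Finset.mem_erase.2 ⟨hij.symm, Finset.mem_univ _⟩
  set R : ℝ := ∏ l ∈ (Finset.univ.erase i).erase j, (b l - a l) with hR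
  have hRpos : 0 < R := Finset.prod_pos fun l _ => sub_pos.2 (hab l)
  refine ⟨C ^ 2, R, hRpos, fun n hn K => ?_⟩
  set z : ℂ := coef (cntC (a j) (b j)) 1 with hz
  set φ : Fin d → ℝ → ℂ :=
    Function.update (fun _ _ => 1) j fun y => ex (-(((1 : ℤ) : ℝ) * y)) with hφ
  have hφj : φ j = fun y => ex (-(((1 : ℤ) : ℝ) * y)) := Function.update_self ..
  have hφl : ∀ l, l ≠ j → φ l = fun _ => 1 := fun l hl => Function.update_of_ne hl ..
  have hφm : ∀ l, Measurable (φ l) := by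
    intro l
    by_cases hl : l = j
    · rw [hl, hφj]
      exact continuous_ex.measurable.comp (by fun_prop)
    · rw [hφl l hl]
      exact measurable_const
  have hφ1 : ∀ l y, ‖φ l y‖ ≤ 1 := by
    intro l y
    by_cases hl : l = j
    · rw [hl, hφj, norm_ex]
    · rw [hφl l hl, norm_one]
  have hQ : ∏ l ∈ Finset.univ.erase i, ∫ y, φ l y ∂unitMeas = 0 := by
    refine Finset.prod_eq_zero hji ?_
    have := coef_const 1 1 one_ne_zero
    simpa only [coef, one_mul, hφj] using this
  have hP : ∀ k : ℕ, ∏ l ∈ Finset.univ.erase i,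
      ∫ y, cntC (a l) (b l) (y + k * α l) * φ l y ∂unitMeas = ex (k * α j) * (z * R) := by
    intro k
    have h1 : ∫ y, cntC (a j) (b j) (y + k * α j) * φ j y ∂unitMeas = ex (k * α j) * z := by
      have := coef_shift (cntC (a j) (b j)) (cntC_add_one _ _) (k * α j) 1
      rw [Int.cast_one, one_mul] at this
      rw [hφj, hz, ← this, coef]
    have h2 : ∏ l ∈ (Finset.univ.erase i).erase j,
        ∫ y, cntC (a l) (b l) (y + k * α l) * φ l y ∂unitMeas = (R : ℂ) := by
      rw [hR, Complex.ofReal_prod]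
      refine Finset.prod_congr rfl fun l hl => ?_
      rw [hφl l (Finset.ne_of_mem_erase hl), integral_cntC_mul_one]
    rw [← Finset.mul_prod_erase _ _ hji, h1, h2, mul_assoc]
  set W : ℝ → ℂ := fun y =>
    ∑ k ∈ Finset.range n, cntC (a i) (b i) (y + k * α i) * (ex (k * α j) * (z * R)) with hW
  have hcm : ∀ c : ℝ, Measurable fun y => cntC (a i) (b i) (y + c) :=
    fun c => (measurable_cntC _ _).comp (by fun_prop)
  have hWm : Measurable W := Finset.measurable_fun_sum _ fun k _ => (hcm _).mul_const _
  have hWb : ∀ᵐ y ∂unitMeas, ‖W y‖ ≤ C := by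
    filter_upwards [hC n hn i φ hφm hφ1] with y hy
    simpa only [hQ, hP, mul_zero, sub_zero] using hy
  have hWc : ∀ m : ℤ, ‖coef W m‖ = R * ‖z‖ * ‖coef (cntC (a i) (b i)) m‖ *
      ‖∑ k ∈ Finset.range n, ex (m * α i + α j) ^ k‖ := by
    intro m
    have e : coef W m = (z * R) * coef (cntC (a i) (b i)) m *
        ∑ k ∈ Finset.range n, ex (m * α i + α j) ^ k := by
      have h1 : coef W m = ∑ k ∈ Finset.range n,
          (ex (k * α j) * (z * R)) * coef (fun y => cntC (a i) (b i) (y + k * α i)) m := by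
        simp only [coef, ← integral_const_mul]
        rw [← integral_finsetSum]
        · refine integral_congr_ae (Filter.Eventually.of_forall fun y => ?_)
          simp only [hW, Finset.sum_mul]
          exact Finset.sum_congr rfl fun k _ => by ring
        · intro k _
          have := integrable_mul_ex (hcm (k * α i)) _ (fun y => norm_cntC_le _ _ _) (-m)
          simp only [neg_mul] at this
          exact this.const_mul _
      rw [h1, Finset.mul_sum]
      refine Finset.sum_congr rfl fun k _ => ?_
      have h2 : (k : ℝ) * (m * α i + α j) = k * α j + m * (k * α i) := by ring
      rw [coef_shift _ (cntC_add_one _ _), ← ex_nat_mul, h2, ex_add]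
      ring
    rw [e, norm_mul, norm_mul, norm_mul, Complex.norm_real, Real.norm_eq_abs, abs_of_pos hRpos]
    ring
  have hP := hasSum_coef hWm C hWb
  simp only [← hWc]
  refine (sum_le_hasSum K (fun m _ => by positivity) hP).trans ?_
  calc ∫ y, ‖W y‖ ^ 2 ∂unitMeas ≤ ∫ _, C ^ 2 ∂unitMeas := by
        refine integral_mono_of_nonneg (Filter.Eventually.of_forall fun y => by positivity)
          (integrable_const _) ?_
        filter_upwards [hWb] with y hy
        exact pow_le_pow_left₀ (norm_nonneg _) hy 2
    _ = C ^ 2 := by simp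

/-- Resonant frequencies: infinitely many `m` make the weight of
`exp (2 π i (m α i + α j))` in the Fourier bound larger than a fixed constant. -/
lemma exists_resonant {d : ℕ} {α : Fin d → ℝ} (hα : IsIrrationalVector α) {i j : Fin d}
    (hij : i ≠ j) (a b : ℝ) (q p : ℤ) (hq : q ≠ 0) (hL : b - a = q * α i + p) :
    ∃ ε : ℝ, 0 < ε ∧ ∀ N : ℤ, ∃ m : ℤ, N < m ∧
      ε ≤ ‖coef (cntC a b) m‖ / ‖ex (m * α i + α j) - 1‖ := by
  have hirr : Irrational (α i) := by
    rintro ⟨r, hr⟩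
    have h1 : (r.den : ℤ) * α i + (0 : ℤ) * α j = r.num := by
      rw [← hr]
      have := Rat.mul_den_eq_num r
      have : (r : ℝ) * r.den = r.num := by exact_mod_cast this
      push_cast
      linarith
    have := (hα.eq_zero_of_two hij _ _ _ h1).1
    exact r.den_ne_zero (by exact_mod_cast this)
  have hpi := Real.pi_pos
  set δ : ℝ := ‖ex (-(q * α j)) - 1‖ with hδ
  have hδpos : 0 < δ := by
    refine norm_pos_iff.2 (sub_ne_zero.2 fun h1 => ?_)
    obtain ⟨k, hk⟩ := (ex_eq_one_iff _).1 h1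
    exact hq (hα.eq_zero_of_two hij 0 q (-k) (by push_cast; linarith)).2
  refine ⟨(δ / 2) / (24 * Real.pi ^ 2), by positivity, fun N => ?_⟩
  obtain ⟨M, hM⟩ := exists_nat_gt (24 * Real.pi * |(q : ℝ)| / δ)
  obtain ⟨m, p', hm, hmp⟩ := exists_inhomogeneous_approx (α i) (α j) hirr (max M N.toNat)
  refine ⟨m, by omega, ?_⟩
  have hm0 : (0 : ℤ) < m := by omega
  have hmR : (0 : ℝ) < m := by exact_mod_cast hm0
  have hMm : (M : ℝ) < m := by
    have : (M : ℤ) < m := by omega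
    exact_mod_cast this
  set t : ℝ := m * α i + α j - p' with ht
  have hω : ex (m * α i + α j) = ex t := by
    have : m * α i + α j = t + p' := by rw [ht]; ring
    rw [this, ex_add, ex_int, mul_one]
  have hωne : 0 < ‖ex t - 1‖ := by
    refine norm_pos_iff.2 (sub_ne_zero.2 fun h1 => ?_)
    obtain ⟨k, hk⟩ := (ex_eq_one_iff _).1 h1
    exact one_ne_zero (hα.eq_zero_of_two hij m 1 (k + p') (by push_cast; linarith)).2
  have hωle : ‖ex t - 1‖ ≤ 12 * Real.pi / m := by
    rw [le_div_iff₀ hmR]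
    have := mul_le_mul_of_nonneg_right (norm_ex_sub_one_le t) hmR.le
    nlinarith
  -- modulo one, `m (b - a)` is `q t - q α j`, where `t` is small
  have hexL : ex (m * (b - a)) = ex (q * t) * ex (-(q * α j)) := by
    have : m * (b - a) = q * t + -(q * α j) + ((q * p' + m * p : ℤ) : ℝ) := by
      rw [hL, ht]
      push_cast
      ring
    rw [this, ex_add, ex_int, mul_one, ex_add]
  have hnum : δ / 2 ≤ ‖ex (m * (b - a)) - 1‖ := by
    have h1 : δ ≤ ‖ex (m * (b - a)) - 1‖ + ‖ex (q * t) - 1‖ := by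
      have e : ex (-(q * α j)) - 1 =
          (ex (m * (b - a)) - 1) - (ex (q * t) - 1) * ex (-(q * α j)) := by
        rw [hexL]
        ring
      rw [hδ, e]
      refine (norm_sub_le _ _).trans ?_
      rw [norm_mul, norm_ex, mul_one]
    have h2 : ‖ex (q * t) - 1‖ ≤ δ / 2 := by
      refine (norm_ex_sub_one_le _).trans ?_
      rw [abs_mul]
      rw [div_lt_iff₀ hδpos] at hM
      have h3 : 24 * Real.pi * |(q : ℝ)| ≤ m * δ :=
        hM.le.trans (mul_le_mul_of_nonneg_right hMm.le hδpos.le)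
      have h4 : 2 * Real.pi * |(q : ℝ)| * (m * |t|) ≤ 2 * Real.pi * |(q : ℝ)| * 6 :=
        mul_le_mul_of_nonneg_left hmp (by positivity)
      have h5 : m * (2 * Real.pi * (|(q : ℝ)| * |t|)) ≤ m * (δ / 2) := by nlinarith
      exact le_of_mul_le_mul_left h5 hmR
    linarith
  rw [norm_coef_cntC a b m hm0.ne', hω, abs_of_pos hmR, le_div_iff₀ hωne]
  calc (δ / 2) / (24 * Real.pi ^ 2) * ‖ex t - 1‖
      ≤ (δ / 2) / (24 * Real.pi ^ 2) * (12 * Real.pi / m) := by gcongr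
    _ = (δ / 2) / (2 * Real.pi * m) := by
        field_simp
        norm_num
    _ ≤ _ := by gcongr

lemma not_two_nonint {d : ℕ} (α a b : Fin d → ℝ) (hα : IsIrrationalVector α)
    (hab : ∀ i, a i < b i) (I : Fin d → Set ℝ)
    (hI : ∀ i, Set.Ioo (a i) (b i) ⊆ I i ∧ I i ⊆ Set.Icc (a i) (b i))
    (h : IsBRS α (Set.univ.pi I)) (i j : Fin d) (hij : i ≠ j) (hi : ¬ ∃ m : ℤ, b i - a i = m)
    (hj : ¬ ∃ m : ℤ, b j - a j = m) : False := by
  obtain ⟨q, p, hqp⟩ := length_mem_of_isBRS α a b hab I hI h i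
  have hq : q ≠ 0 := by
    rintro rfl
    exact hi ⟨p, by rw [hqp]; simp⟩
  obtain ⟨C, R, hR, hC⟩ := exists_fourier_bound α a b hab I hI h i j hij
  obtain ⟨ε, hε, hres⟩ := exists_resonant hα hij (a i) (b i) q p hq hqp
  set Z : ℝ := R * ‖coef (cntC (a j) (b j)) 1‖ with hZ
  have hZpos : 0 < Z := by
    refine mul_pos hR ?_
    rw [norm_coef_cntC _ _ _ one_ne_zero]
    refine div_pos (norm_pos_iff.2 (sub_ne_zero.2 fun h1 => hj ?_)) (by simp [Real.pi_pos])
    rwa [Int.cast_one, one_mul, ex_eq_one_iff] at h1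
  set A : ℤ → ℝ := fun m =>
    (Z * (‖coef (cntC (a i) (b i)) m‖ / ‖ex (m * α i + α j) - 1‖)) ^ 2 with hA
  have hω1 : ∀ m : ℤ, ex (m * α i + α j) ≠ 1 := by
    intro m h1
    obtain ⟨k, hk⟩ := (ex_eq_one_iff _).1 h1
    exact one_ne_zero (hα.eq_zero_of_two hij m 1 k (by push_cast; linarith)).2
  have hsum : ∀ K : Finset ℤ, 2 * ∑ m ∈ K, A m ≤ C := by
    intro K
    refine sum_le_of_forall_sum_pow K A (fun m => ex (m * α i + α j)) (fun m => by positivity)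
      (fun m => norm_ex _) (fun m _ => hω1 m) C fun n hn => ?_
    refine le_trans (le_of_eq (Finset.sum_congr rfl fun m _ => ?_)) (hC n hn K)
    have hpos : ‖ex (m * α i + α j) - 1‖ ≠ 0 := norm_ne_zero_iff.2 (sub_ne_zero.2 (hω1 m))
    simp only [hA]
    rw [← geom_sum_mul, norm_mul]
    field_simp
  have hinf : {m : ℤ | (Z * ε) ^ 2 ≤ A m}.Infinite := by
    refine Set.infinite_of_forall_exists_gt fun N => ?_
    obtain ⟨m, hm, hm'⟩ := hres N
    exact ⟨m, pow_le_pow_left₀ (by positivity) (mul_le_mul_of_nonneg_left hm' hZpos.le) 2, hm⟩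
  obtain ⟨N, hN⟩ := exists_nat_gt (C / (Z * ε) ^ 2)
  have hZε : 0 < (Z * ε) ^ 2 := by positivity
  rw [div_lt_iff₀ hZε] at hN
  obtain ⟨K, hK, hKN⟩ := hinf.exists_subset_card_eq N
  have h1 : N * (Z * ε) ^ 2 ≤ ∑ m ∈ K, A m := by
    rw [← hKN, ← nsmul_eq_mul]
    exact Finset.card_nsmul_le_sum _ _ _ fun m hm => hK hm
  have h2 : 0 ≤ ∑ m ∈ K, A m := Finset.sum_nonneg fun m _ => sq_nonneg _
  linarith [hsum K]

/-- Liardet: a product of `d` bounded intervals of positive length is a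
bounded remainder set iff one interval has length in `ℤα_j + ℤ` and all other intervals
have integer length. -/
theorem stmt18 {d : ℕ} (hd : 1 ≤ d) (α : Fin d → ℝ) (hα : IsIrrationalVector α)
    (a b : Fin d → ℝ) (hab : ∀ i, a i < b i) (I : Fin d → Set ℝ)
    (hI : ∀ i, Set.Ioo (a i) (b i) ⊆ I i ∧ I i ⊆ Set.Icc (a i) (b i)) :
    IsBRS α (Set.univ.pi I) ↔
      ∃ j : Fin d, (∃ q p : ℤ, b j - a j = (q : ℝ) * α j + (p : ℝ)) ∧
        ∀ i, i ≠ j → ∃ m : ℤ, b i - a i = (m : ℝ) := by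
  constructor
  · intro h
    by_cases hex : ∃ j, ¬ ∃ m : ℤ, b j - a j = m
    · obtain ⟨j, hj⟩ := hex
      refine ⟨j, length_mem_of_isBRS α a b hab I hI h j, fun i hij => ?_⟩
      by_contra hi
      exact not_two_nonint α a b hα hab I hI h i j hij hi hj
    · push Not at hex
      exact ⟨⟨0, hd⟩, length_mem_of_isBRS α a b hab I hI h _, fun i _ => hex i⟩
  · rintro ⟨j, ⟨q, p, hj⟩, hi⟩
    exact isBRS_of_lengths α a b hab I hI j q p hj hi
end
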